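/- With the same setup, if the chain {X_n} is geometrically ergodic and ∫|h(x)|^{2+ε} p(x)dx < ∞ for some ε > 0, then √n(Î_n − I) converges weakly to a normal distribution N(0, σ²(h)) with σ²(h) = (C_{11} + I²C_{22} − 2I C_{12})/r², where r = ∫σ(x)p(x)dx and C_{11}, C_{22}, C_{12} are the asymptotic (co)variances of the functionals hσ and σ along the chain. -/

import Mathlib

open MeasureTheory ProbabilityTheory Filter

/-- `n`-step iterate of a Markov kernel. -/
noncomputable def kernelIter {E : Type*} [MeasurableSpace E]
    (κ : Kernel E E) : ℕ → Kernel E E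
  | 0 => Kernel.id
  | n + 1 => κ ∘ₖ kernelIter κ n

/-- Action of the `n`-step kernel on a function: `(P^n g)(x)`. -/
noncomputable def kernelOp {E : Type*} [MeasurableSpace E]
    (κ : Kernel E E) (n : ℕ) (g : E → ℝ) (x : E) : ℝ :=
  ∫ y, g y ∂(kernelIter κ n x)

/-- Stationary lag-`n` covariance `Cov_ρ(f(X_0), g(X_n))`. -/
noncomputable def kernelCov {E : Type*} [MeasurableSpace E]
    (κ : Kernel E E) (ρ : Measure E) (f g : E → ℝ) (n : ℕ) : ℝ :=
  (∫ x, f x * kernelOp κ n g x ∂ρ) - (∫ x, f x ∂ρ) * ∫ x, g x ∂ρ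

/-- Geometric ergodicity: the `n`-step transition probabilities converge to the
invariant distribution geometrically fast. -/
def GeometricallyErgodic {E : Type*} [MeasurableSpace E]
    (κ : Kernel E E) (ρ : Measure E) : Prop :=
  ∃ C : E → ℝ, ∃ r : ℝ, 0 ≤ r ∧ r < 1 ∧
    ∀ x : E, ∀ n : ℕ, ∀ A : Set E, MeasurableSet A →
      |(kernelIter κ n x A).toReal - (ρ A).toReal| ≤ C x * r ^ n

/-- `X` is a Markov chain with transition kernel `κ` under `P`. -/
def IsMarkovChain {Ω E : Type*} [MeasurableSpace Ω] [MeasurableSpace E]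
    (P : Measure Ω) (X : ℕ → Ω → E) (κ : Kernel E E) : Prop :=
  (∀ n, Measurable (X n)) ∧
  ∀ n : ℕ, ∀ A : Set E, MeasurableSet A →
    P[(fun ω => Set.indicator A (fun _ => (1 : ℝ)) (X (n + 1) ω)) |
        MeasurableSpace.comap (fun ω (i : Fin (n + 1)) => X i ω) MeasurableSpace.pi]
      =ᵐ[P] fun ω => (κ (X n ω) A).toReal

/-!
Since the geometric ergodicity constant `C x` is finite for every `x`, it is bounded on some set `B`
of positive stationary mass. Decomposing a path at its first visit to `B`, and bounding
geometrically the probability of avoiding `B`, gives `∫ |Pⁿg - ∫ g dρ| dρ ≤ K lⁿ` for bounded `g`.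
Truncation turns the extra `ε` of moments into a summable decay of `Pⁿf` in `L²(ρ)` for centred `f`,
so the Poisson equation `f = F - PF` has a solution in `L²(ρ)`, and `∑ f(X_k)` is a sum of the
martingale differences `F(X_{k+1}) - PF(X_k)` plus boundary terms. With `v` the stationary variance
of an increment, mixing makes the conditional variance asymptotically uncorrelated with the past, so
that `E exp(iθS_{j+1}) ≈ (1 - θ²v/2) E exp(iθS_j)`, which gives the Gaussian limit with `θ = t/√n`.
For the ratio estimator, take `f = hσ - Iσ` and divide by `n⁻¹ ∑ σ(X_k) → r`.
-/

section MarkovOperator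

variable {E : Type*} [MeasurableSpace E] {κ η : Kernel E E} {ρ : Measure E} {g : E → ℝ} {c : ℝ}

instance kernelIter_isMarkovKernel [IsMarkovKernel κ] (n : ℕ) :
    IsMarkovKernel (kernelIter κ n) := by
  induction n with
  | zero => rw [kernelIter]; infer_instance
  | succ n ih => rw [kernelIter]; infer_instance

theorem kernelIter_succ_eq_comp (κ : Kernel E E) (n : ℕ) :
    kernelIter κ (n + 1) = kernelIter κ n ∘ₖ κ := by
  induction n with
  | zero => simp [kernelIter]
  | succ n ih =>
    calc kernelIter κ (n + 2) = κ ∘ₖ (kernelIter κ n ∘ₖ κ) := by rw [← ih]; rfl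
      _ = kernelIter κ (n + 1) ∘ₖ κ := (Kernel.comp_assoc _ _ _).symm

theorem invariant_kernelIter (hκ : Kernel.Invariant κ ρ) (n : ℕ) :
    Kernel.Invariant (kernelIter κ n) ρ := by
  induction n with
  | zero => simp [kernelIter, Kernel.Invariant]
  | succ n ih => exact hκ.comp ih

theorem integrable_of_measurable_of_abs_le {ν : Measure E} [IsFiniteMeasure ν]
    (hg : Measurable g) (hc : ∀ x, |g x| ≤ c) : Integrable g ν :=
  Integrable.of_bound hg.aestronglyMeasurable c (ae_of_all _ hc)

theorem abs_integral_le_of_abs_le {ν : Measure E} [IsProbabilityMeasure ν]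
    (hc : ∀ x, |g x| ≤ c) : |∫ x, g x ∂ν| ≤ c := by
  simpa using norm_integral_le_of_norm_le_const (μ := ν) (f := g) (ae_of_all _ hc)

theorem measurable_integral_kernel (hg : Measurable g) :
    Measurable fun x => ∫ y, g y ∂η x :=
  (hg.stronglyMeasurable.integral_kernel (κ := η)).measurable

theorem ae_integrable_of_invariant (hη : Kernel.Invariant η ρ) (hg : Integrable g ρ) :
    ∀ᵐ x ∂ρ, Integrable g (η x) :=
  Measure.ae_integrable_of_integrable_comp (by rwa [hη.def])

theorem ae_ae_of_invariant (hη : Kernel.Invariant η ρ) {p : E → Prop} (hp : ∀ᵐ x ∂ρ, p x) :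
    ∀ᵐ x ∂ρ, ∀ᵐ y ∂η x, p y :=
  Measure.ae_ae_of_ae_comp (by rwa [hη.def])

theorem integrable_integral_of_invariant (hη : Kernel.Invariant η ρ) (hg : Integrable g ρ) :
    Integrable (fun x => ∫ y, g y ∂η x) ρ := by
  rw [← hη.def, Measure.comp_eq_comp_const_apply] at hg
  exact hg.integral_comp

theorem integral_integral_of_invariant (hη : Kernel.Invariant η ρ) (hg : Integrable g ρ) :
    ∫ x, ∫ y, g y ∂η x ∂ρ = ∫ x, g x ∂ρ := by
  rw [← hη.def, Measure.comp_eq_comp_const_apply] at hg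
  conv_rhs => rw [← hη.def, Measure.comp_eq_comp_const_apply, Kernel.integral_comp hg]
  rfl

theorem kernelOp_zero (hg : Measurable g) : kernelOp κ 0 g = g := by
  funext x
  simp [kernelOp, kernelIter, Kernel.id_apply, integral_dirac' _ _ hg.stronglyMeasurable]

theorem measurable_kernelOp (n : ℕ) (hg : Measurable g) :
    Measurable (kernelOp κ n g) :=
  measurable_integral_kernel hg

theorem abs_kernelOp_le [IsMarkovKernel κ] (hc : ∀ x, |g x| ≤ c) (n : ℕ) (x : E) :
    |kernelOp κ n g x| ≤ c :=
  abs_integral_le_of_abs_le hc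

theorem kernelOp_succ (n : ℕ) {x : E} (hg : Integrable g (kernelIter κ (n + 1) x)) :
    kernelOp κ (n + 1) g x = ∫ y, kernelOp κ n g y ∂κ x := by
  rw [kernelIter_succ_eq_comp] at hg
  rw [kernelOp, kernelIter_succ_eq_comp, Kernel.integral_comp hg]
  rfl

theorem sq_integral_le_integral_sq {ν : Measure E} [IsProbabilityMeasure ν] (hg : MemLp g 2 ν) :
    (∫ x, g x ∂ν) ^ 2 ≤ ∫ x, g x ^ 2 ∂ν := by
  have h := variance_nonneg g ν
  rw [variance_eq_sub hg] at h
  simpa using h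

theorem ae_sq_integral_le_integral_sq [IsMarkovKernel η] (hη : Kernel.Invariant η ρ)
    (hgm : Measurable g) (hg : MemLp g 2 ρ) :
    ∀ᵐ x ∂ρ, (∫ y, g y ∂η x) ^ 2 ≤ ∫ y, g y ^ 2 ∂η x := by
  filter_upwards [ae_integrable_of_invariant hη hg.integrable_sq] with x hx
  exact sq_integral_le_integral_sq ((memLp_two_iff_integrable_sq hgm.aestronglyMeasurable).2 hx)

theorem memLp_two_integral_kernel [IsMarkovKernel η] (hη : Kernel.Invariant η ρ)
    (hgm : Measurable g) (hg : MemLp g 2 ρ) : MemLp (fun x => ∫ y, g y ∂η x) 2 ρ := by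
  have hm : Measurable fun x => ∫ y, g y ∂η x := measurable_integral_kernel hgm
  refine (memLp_two_iff_integrable_sq hm.aestronglyMeasurable).2 <|
    (integrable_integral_of_invariant hη hg.integrable_sq).mono'
      (hm.pow_const 2).aestronglyMeasurable ?_
  filter_upwards [ae_sq_integral_le_integral_sq hη hgm hg] with x hx
  rwa [Real.norm_of_nonneg (sq_nonneg _)]

theorem integral_sq_integral_kernel_le [IsMarkovKernel η] (hη : Kernel.Invariant η ρ)
    (hgm : Measurable g) (hg : MemLp g 2 ρ) :
    ∫ x, (∫ y, g y ∂η x) ^ 2 ∂ρ ≤ ∫ x, g x ^ 2 ∂ρ :=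
  calc ∫ x, (∫ y, g y ∂η x) ^ 2 ∂ρ ≤ ∫ x, ∫ y, g y ^ 2 ∂η x ∂ρ :=
        integral_mono_ae (memLp_two_integral_kernel hη hgm hg).integrable_sq
          (integrable_integral_of_invariant hη hg.integrable_sq)
          (ae_sq_integral_le_integral_sq hη hgm hg)
    _ = ∫ x, g x ^ 2 ∂ρ := integral_integral_of_invariant hη hg.integrable_sq

theorem abs_integral_sub_le_of_nonneg_of_le {μ ν : Measure E} [IsProbabilityMeasure μ]
    [IsProbabilityMeasure ν] {δ : ℝ} (h : ∀ A, MeasurableSet A → |μ.real A - ν.real A| ≤ δ)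
    (hg : Measurable g) (h0 : ∀ x, 0 ≤ g x) (hc : ∀ x, g x ≤ c) :
    |∫ x, g x ∂μ - ∫ x, g x ∂ν| ≤ c * δ := by
  obtain ⟨x₀⟩ := μ.nonempty_of_neZero
  have layer (ξ : Measure E) [IsProbabilityMeasure ξ] :
      ∫ x, g x ∂ξ = ∫ t in Set.Ioc 0 c, ξ.real {a | t ≤ g a} :=
    (integrable_of_measurable_of_abs_le hg
      fun x => (abs_of_nonneg (h0 x)).trans_le (hc x)).integral_eq_integral_Ioc_meas_le
        (ae_of_all _ h0) (ae_of_all _ hc)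
  have hint (ξ : Measure E) [IsProbabilityMeasure ξ] :
      IntegrableOn (fun t => ξ.real {a | t ≤ g a}) (Set.Ioc 0 c) volume := by
    have anti : Antitone fun t => ξ.real {a | t ≤ g a} :=
      fun s t hst => measureReal_mono fun a (ha : t ≤ g a) => hst.trans ha
    exact ((anti.antitoneOn _).integrableOn_isCompact isCompact_Icc).mono_set
      Set.Ioc_subset_Icc_self
  rw [layer, layer, ← integral_sub (hint μ) (hint ν)]
  simpa [max_eq_left ((h0 x₀).trans (hc x₀)), mul_comm] using
    norm_setIntegral_le_of_norm_le_const (μ := volume) (s := Set.Ioc (0 : ℝ) c)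
      (C := δ) (f := fun t => μ.real {a | t ≤ g a} - ν.real {a | t ≤ g a}) (by simp)
      fun t _ => h _ (measurableSet_le measurable_const hg)

theorem abs_integral_sub_le_of_measureReal_sub_le {μ ν : Measure E} [IsProbabilityMeasure μ]
    [IsProbabilityMeasure ν] {δ : ℝ} (h : ∀ A, MeasurableSet A → |μ.real A - ν.real A| ≤ δ)
    (hg : Measurable g) (hc : ∀ x, |g x| ≤ c) :
    |∫ x, g x ∂μ - ∫ x, g x ∂ν| ≤ 2 * c * δ := by
  have shift (ξ : Measure E) [IsProbabilityMeasure ξ] :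
      ∫ x, (g x + c) ∂ξ = ∫ x, g x ∂ξ + c := by
    simp [integral_add (integrable_of_measurable_of_abs_le hg hc) (integrable_const c)]
  have h' := abs_integral_sub_le_of_nonneg_of_le h (g := fun x => g x + c) (c := 2 * c)
    (by fun_prop) (fun x => by linarith [abs_le.1 (hc x)]) fun x => by linarith [abs_le.1 (hc x)]
  rwa [shift, shift, add_sub_add_right_eq_sub] at h'

end MarkovOperator

section HittingTime

variable {E : Type*} [MeasurableSpace E]

/-- Probability that the chain started at `x` does not visit `B` during `0, …, n`. -/
noncomputable def avoidProb (κ : Kernel E E) (B : Set E) : ℕ → E → ℝ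
  | 0 => Bᶜ.indicator 1
  | n + 1 => Bᶜ.indicator fun x => ∫ y, avoidProb κ B n y ∂κ x

/-- Expectation of `r ^ (n - τ)` on `τ ≤ n`, where `τ` is the first visit to `B`
of the chain started at `x`. -/
noncomputable def discountedHit (κ : Kernel E E) (B : Set E) (r : ℝ) : ℕ → E → ℝ
  | 0 => B.indicator 1
  | n + 1 => fun x => B.indicator (fun _ => r ^ (n + 1)) x +
      Bᶜ.indicator (fun x => ∫ y, discountedHit κ B r n y ∂κ x) x

variable {κ : Kernel E E} {B : Set E} {r : ℝ}

theorem avoidProb_of_mem {x : E} (hx : x ∈ B) (n : ℕ) : avoidProb κ B n x = 0 := by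
  cases n <;> simp [avoidProb, hx]

theorem discountedHit_of_mem {x : E} (hx : x ∈ B) (n : ℕ) : discountedHit κ B r n x = r ^ n := by
  cases n <;> simp [discountedHit, hx]

theorem avoidProb_succ_of_notMem {x : E} (hx : x ∉ B) (n : ℕ) :
    avoidProb κ B (n + 1) x = ∫ y, avoidProb κ B n y ∂κ x := by
  simp [avoidProb, hx]

theorem discountedHit_succ_of_notMem {x : E} (hx : x ∉ B) (n : ℕ) :
    discountedHit κ B r (n + 1) x = ∫ y, discountedHit κ B r n y ∂κ x := by
  simp [discountedHit, hx]

theorem discountedHit_zero_add_avoidProb_zero (x : E) :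
    discountedHit κ B r 0 x + avoidProb κ B 0 x = 1 := by
  by_cases hx : x ∈ B <;> simp [discountedHit, avoidProb, hx]

theorem avoidProb_nonneg (n : ℕ) (x : E) : 0 ≤ avoidProb κ B n x := by
  induction n generalizing x with
  | zero => exact Set.indicator_nonneg (fun _ _ => zero_le_one) x
  | succ n ih => exact Set.indicator_nonneg (fun _ _ => integral_nonneg ih) x

theorem discountedHit_nonneg (hr0 : 0 ≤ r) (n : ℕ) (x : E) : 0 ≤ discountedHit κ B r n x := by
  induction n generalizing x with
  | zero => exact Set.indicator_nonneg (fun _ _ => zero_le_one) x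
  | succ n ih =>
    exact add_nonneg (Set.indicator_nonneg (fun _ _ => by positivity) x)
      (Set.indicator_nonneg (fun _ _ => integral_nonneg ih) x)

theorem measurable_avoidProb (hB : MeasurableSet B) (n : ℕ) : Measurable (avoidProb κ B n) := by
  induction n with
  | zero => exact measurable_one.indicator hB.compl
  | succ n ih => exact (measurable_integral_kernel ih).indicator hB.compl

theorem measurable_discountedHit (hB : MeasurableSet B) (n : ℕ) :
    Measurable (discountedHit κ B r n) := by
  induction n with
  | zero => exact measurable_one.indicator hB
  | succ n ih =>
    exact (measurable_const.indicator hB).add ((measurable_integral_kernel ih).indicator hB.compl)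

variable [IsMarkovKernel κ]

theorem abs_avoidProb_le_one (n : ℕ) (x : E) : |avoidProb κ B n x| ≤ 1 := by
  induction n generalizing x with
  | zero => by_cases hx : x ∈ B <;> simp [avoidProb, hx]
  | succ n ih =>
    by_cases hx : x ∈ B
    · simp [avoidProb_of_mem hx]
    · simpa only [avoidProb_succ_of_notMem hx] using abs_integral_le_of_abs_le ih

theorem abs_discountedHit_le_one (hr0 : 0 ≤ r) (hr1 : r ≤ 1) (n : ℕ) (x : E) :
    |discountedHit κ B r n x| ≤ 1 := by
  induction n generalizing x with
  | zero => by_cases hx : x ∈ B <;> simp [discountedHit, hx]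
  | succ n ih =>
    by_cases hx : x ∈ B
    · simpa [discountedHit_of_mem hx, abs_of_nonneg hr0] using pow_le_one₀ hr0 hr1
    · simpa only [discountedHit_succ_of_notMem hx] using abs_integral_le_of_abs_le ih

theorem integrable_avoidProb (hB : MeasurableSet B) (ν : Measure E) [IsFiniteMeasure ν] (n : ℕ) :
    Integrable (avoidProb κ B n) ν :=
  integrable_of_measurable_of_abs_le (measurable_avoidProb hB n) (abs_avoidProb_le_one n)

theorem integrable_discountedHit (hB : MeasurableSet B) (hr0 : 0 ≤ r) (hr1 : r ≤ 1)
    (ν : Measure E) [IsFiniteMeasure ν] (n : ℕ) : Integrable (discountedHit κ B r n) ν :=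
  integrable_of_measurable_of_abs_le (measurable_discountedHit hB n)
    (abs_discountedHit_le_one hr0 hr1 n)

theorem discountedHit_add_avoidProb_succ (hB : MeasurableSet B) (hr0 : 0 ≤ r) (hr1 : r ≤ 1)
    (n : ℕ) (x : E) :
    discountedHit κ B r (n + 1) x + avoidProb κ B (n + 1) x =
      r * discountedHit κ B r n x + avoidProb κ B n x := by
  induction n generalizing x with
  | zero =>
    by_cases hx : x ∈ B
    · simp [discountedHit_of_mem hx, avoidProb_of_mem hx]
    · rw [discountedHit_succ_of_notMem hx, avoidProb_succ_of_notMem hx,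
        ← integral_add (integrable_discountedHit hB hr0 hr1 _ 0) (integrable_avoidProb hB _ 0)]
      simp_rw [discountedHit_zero_add_avoidProb_zero]
      simp [discountedHit, avoidProb, hx]
  | succ n ih =>
    by_cases hx : x ∈ B
    · simp [discountedHit_of_mem hx, avoidProb_of_mem hx, pow_succ']
    · rw [discountedHit_succ_of_notMem hx (n + 1), avoidProb_succ_of_notMem hx (n + 1),
        ← integral_add (integrable_discountedHit hB hr0 hr1 _ _) (integrable_avoidProb hB _ _)]
      simp_rw [ih]
      rw [integral_add ((integrable_discountedHit hB hr0 hr1 _ n).const_mul r)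
          (integrable_avoidProb hB _ n), integral_const_mul,
        discountedHit_succ_of_notMem hx, avoidProb_succ_of_notMem hx]

theorem ae_le_avoidProb_add_discountedHit {ρ : Measure E} (hκ : Kernel.Invariant κ ρ)
    (hB : MeasurableSet B) (hr0 : 0 ≤ r) (hr1 : r ≤ 1) {a : ℕ → E → ℝ} {α M : ℝ}
    (hint : ∀ n x, Integrable (a n) (κ x)) (hzero : ∀ x ∉ B, a 0 x ≤ α)
    (hsucc : ∀ n, ∀ x ∉ B, a (n + 1) x ≤ ∫ y, a n y ∂κ x)
    (hmem : ∀ n, ∀ᵐ x ∂ρ, x ∈ B → a n x ≤ M * r ^ n) (n : ℕ) :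
    ∀ᵐ x ∂ρ, a n x ≤ α * avoidProb κ B n x + M * discountedHit κ B r n x := by
  induction n with
  | zero =>
    filter_upwards [hmem 0] with x hx
    by_cases hxB : x ∈ B
    · simpa [discountedHit, avoidProb, hxB] using hx hxB
    · simpa [discountedHit, avoidProb, hxB] using hzero x hxB
  | succ n ih =>
    filter_upwards [hmem (n + 1), ae_ae_of_invariant hκ ih] with x hx ihx
    by_cases hxB : x ∈ B
    · simpa [discountedHit_of_mem hxB, avoidProb_of_mem hxB] using hx hxB
    · have hq := (integrable_avoidProb (κ := κ) hB (κ x) n).const_mul α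
      have hs := (integrable_discountedHit (κ := κ) hB hr0 hr1 (κ x) n).const_mul M
      calc a (n + 1) x ≤ ∫ y, a n y ∂κ x := hsucc n x hxB
        _ ≤ ∫ y, (α * avoidProb κ B n y + M * discountedHit κ B r n y) ∂κ x :=
          integral_mono_ae (hint n x) (hq.add hs) ihx
        _ = _ := by
          rw [integral_add hq hs, integral_const_mul, integral_const_mul,
            avoidProb_succ_of_notMem hxB, discountedHit_succ_of_notMem hxB]

theorem integral_le_avoidProb_add_discountedHit {ν : Measure E} [IsFiniteMeasure ν]
    (hB : MeasurableSet B) (hr0 : 0 ≤ r) (hr1 : r ≤ 1) {a : E → ℝ} (ha : Integrable a ν)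
    {α M : ℝ} {n : ℕ}
    (h : ∀ᵐ x ∂ν, a x ≤ α * avoidProb κ B n x + M * discountedHit κ B r n x) :
    ∫ x, a x ∂ν ≤ α * ∫ x, avoidProb κ B n x ∂ν + M * ∫ x, discountedHit κ B r n x ∂ν := by
  have hq := (integrable_avoidProb (κ := κ) hB ν n).const_mul α
  have hs := (integrable_discountedHit (κ := κ) hB hr0 hr1 ν n).const_mul M
  rw [← integral_const_mul, ← integral_const_mul, ← integral_add hq hs]
  exact integral_mono_ae ha (hq.add hs) h

theorem integral_discountedHit_add_avoidProb_succ {ν : Measure E} [IsFiniteMeasure ν]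
    (hB : MeasurableSet B) (hr0 : 0 ≤ r) (hr1 : r ≤ 1) (n : ℕ) :
    ∫ x, discountedHit κ B r (n + 1) x ∂ν + ∫ x, avoidProb κ B (n + 1) x ∂ν =
      r * ∫ x, discountedHit κ B r n x ∂ν + ∫ x, avoidProb κ B n x ∂ν := by
  have hq := integrable_avoidProb (κ := κ) hB ν
  have hs := integrable_discountedHit (κ := κ) hB hr0 hr1 ν
  rw [← integral_add (hs _) (hq _), ← integral_const_mul,
    ← integral_add ((hs _).const_mul r) (hq _)]
  simp_rw [discountedHit_add_avoidProb_succ hB hr0 hr1]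

theorem integral_discountedHit_add_avoidProb_zero {ν : Measure E} [IsProbabilityMeasure ν]
    (hB : MeasurableSet B) (hr0 : 0 ≤ r) (hr1 : r ≤ 1) :
    ∫ x, discountedHit κ B r 0 x ∂ν + ∫ x, avoidProb κ B 0 x ∂ν = 1 := by
  rw [← integral_add (integrable_discountedHit hB hr0 hr1 _ _) (integrable_avoidProb hB _ _)]
  simp [discountedHit_zero_add_avoidProb_zero]

end HittingTime

section GeometricMixing

theorem add_le_pow_of_mul_le {s q : ℕ → ℝ} {c M r : ℝ} (hc : 0 < c) (hM : 0 ≤ M) (hr0 : 0 ≤ r)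
    (hr1 : r ≤ 1) (hzero : s 0 + q 0 ≤ 1) (hsucc : ∀ n, s (n + 1) + q (n + 1) = r * s n + q n)
    (h : ∀ n, c * q n ≤ M * s n) (n : ℕ) :
    s n + q n ≤ (1 - (1 - r) * (c / (c + M))) ^ n := by
  have hratio : c / (c + M) ≤ 1 := div_le_one_of_le₀ (by linarith) (by linarith)
  have hratio0 : 0 ≤ c / (c + M) := by positivity
  induction n with
  | zero => simpa using hzero
  | succ n ih =>
    have hs : c / (c + M) * (s n + q n) ≤ s n := by
      rw [div_mul_eq_mul_div, div_le_iff₀ (by linarith)]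
      linarith [h n]
    calc s (n + 1) + q (n + 1) = s n + q n - (1 - r) * s n := by rw [hsucc]; ring
      _ ≤ s n + q n - (1 - r) * (c / (c + M) * (s n + q n)) := by
        gcongr
      _ = (1 - (1 - r) * (c / (c + M))) * (s n + q n) := by ring
      _ ≤ _ := by
        rw [pow_succ']
        gcongr
        nlinarith

variable {E : Type*} [MeasurableSpace E] {κ : Kernel E E} [IsMarkovKernel κ] {ρ : Measure E}
  [IsProbabilityMeasure ρ]

/-- On `B`, the laws `P^n(x, ·)` approach `ρ` uniformly at the geometric rate `M * r ^ n`. The rate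
is tested on bounded functions, and required for `ρ`-almost every point of `B` only. -/
def UniformlyErgodicOn (κ : Kernel E E) (ρ : Measure E) (B : Set E) (M r : ℝ) : Prop :=
  ∀ (g : E → ℝ) (c : ℝ), Measurable g → (∀ x, |g x| ≤ c) → ∀ n, ∀ᵐ x ∂ρ, x ∈ B →
    |kernelOp κ n g x - ∫ y, g y ∂ρ| ≤ c * M * r ^ n

-- The constant in `GeometricallyErgodic` need not be measurable, hence the measurable hull.
theorem GeometricallyErgodic.exists_uniformlyErgodicOn (hgeo : GeometricallyErgodic κ ρ) :
    ∃ (B : Set E) (M r : ℝ), MeasurableSet B ∧ 0 < ρ.real B ∧ 0 < M ∧ 0 ≤ r ∧ r < 1 ∧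
      UniformlyErgodicOn κ ρ B M r := by
  obtain ⟨C, r, hr0, hr1, hC⟩ := hgeo
  let S : ℕ → Set E := fun m => {x | C x ≤ m + 1}
  have hS : ⋃ m, S m = Set.univ := Set.eq_univ_of_forall fun x =>
    let ⟨m, hm⟩ := exists_nat_ge (C x)
    Set.mem_iUnion.2 ⟨m, hm.trans (by linarith)⟩
  obtain ⟨m, hm⟩ : ∃ m, ρ (S m) ≠ 0 := by
    by_contra! hnull
    simpa [hS] using measure_iUnion_null hnull
  refine ⟨toMeasurable ρ (S m), 2 * (m + 1), r, measurableSet_toMeasurable _ _, ?_, by positivity,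
    hr0, hr1, fun g c hg hc n => ?_⟩
  · rw [measureReal_def, measure_toMeasurable]
    exact ENNReal.toReal_pos hm (measure_ne_top _ _)
  let good : Set E := {x | |kernelOp κ n g x - ∫ y, g y ∂ρ| ≤ c * (2 * (m + 1)) * r ^ n}
  have hgood : MeasurableSet good :=
    measurableSet_le ((measurable_kernelOp n hg).sub_const _).abs measurable_const
  have hsub : S m ⊆ good := fun x hx =>
    (abs_integral_sub_le_of_measureReal_sub_le (fun A hA => (hC x n A hA).trans
      (mul_le_mul_of_nonneg_right hx (by positivity))) hg hc).trans_eq (by ring)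
  have hnull := Measure.measure_toMeasurable_inter hgood.compl (measure_ne_top ρ (S m))
  rw [(Set.disjoint_compl_right_iff_subset.2 hsub).inter_eq, measure_empty] at hnull
  filter_upwards [measure_eq_zero_iff_ae_notMem.1 hnull] with x hx hxB
  exact not_not.1 fun hbad => hx ⟨hxB, hbad⟩

theorem UniformlyErgodicOn.measureReal_mul_integral_avoidProb_le {B : Set E} {M r : ℝ}
    (h : UniformlyErgodicOn κ ρ B M r) (hκ : Kernel.Invariant κ ρ) (hB : MeasurableSet B)
    (hr0 : 0 ≤ r) (hr1 : r ≤ 1) (n : ℕ) :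
    ρ.real B * ∫ x, avoidProb κ B n x ∂ρ ≤ M * ∫ x, discountedHit κ B r n x ∂ρ := by
  let χ : E → ℝ := B.indicator 1
  have hχ : Measurable χ := measurable_one.indicator hB
  have hχ1 (x : E) : |χ x| ≤ 1 := by by_cases hx : x ∈ B <;> simp [χ, hx]
  have hχρ : ∫ x, χ x ∂ρ = ρ.real B := integral_indicator_one hB
  have hint (ν : Measure E) [IsFiniteMeasure ν] (n : ℕ) : Integrable (kernelOp κ n χ) ν :=
    integrable_of_measurable_of_abs_le (measurable_kernelOp n hχ) (abs_kernelOp_le hχ1 n)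
  have hae := ae_le_avoidProb_add_discountedHit hκ hB hr0 hr1 (α := -ρ.real B) (M := M)
    (a := fun n x => kernelOp κ n χ x - ρ.real B)
    (fun n x => (hint _ n).sub (integrable_const _))
    (fun x hx => by simp [kernelOp_zero hχ, χ, hx])
    (fun n x _ => by
      rw [integral_sub (hint _ n) (integrable_const _),
        kernelOp_succ n (integrable_of_measurable_of_abs_le hχ hχ1)]
      simp)
    (fun n => by
      filter_upwards [h χ 1 hχ hχ1 n] with x hx hxB
      simpa [hχρ] using (le_abs_self _).trans (hx hxB)) n
  have hzero : ∫ x, (kernelOp κ n χ x - ρ.real B) ∂ρ = 0 := by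
    rw [integral_sub (hint ρ n) (integrable_const _)]
    simp only [kernelOp]
    rw [integral_integral_of_invariant (invariant_kernelIter hκ n)
      (integrable_of_measurable_of_abs_le hχ hχ1), hχρ]
    simp
  have hmean := integral_le_avoidProb_add_discountedHit hB hr0 hr1
    ((hint ρ n).sub (integrable_const (ρ.real B))) hae
  linarith [hzero.symm.trans_le hmean]

theorem UniformlyErgodicOn.integral_abs_kernelOp_sub_le {B : Set E} {M r : ℝ}
    (h : UniformlyErgodicOn κ ρ B M r) (hκ : Kernel.Invariant κ ρ) (hB : MeasurableSet B)
    (hr0 : 0 ≤ r) (hr1 : r ≤ 1) {g : E → ℝ} {c : ℝ}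
    (hg : Measurable g) (hc : ∀ x, |g x| ≤ c) (n : ℕ) :
    ∫ x, |kernelOp κ n g x - ∫ y, g y ∂ρ| ∂ρ ≤
      2 * c * ∫ x, avoidProb κ B n x ∂ρ + c * M * ∫ x, discountedHit κ B r n x ∂ρ := by
  have hint (ν : Measure E) [IsFiniteMeasure ν] (n : ℕ) :
      Integrable (fun x => kernelOp κ n g x - ∫ y, g y ∂ρ) ν :=
    (integrable_of_measurable_of_abs_le (measurable_kernelOp n hg) (abs_kernelOp_le hc n)).sub
      (integrable_const _)
  refine integral_le_avoidProb_add_discountedHit hB hr0 hr1 (hint ρ n).abs <|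
    ae_le_avoidProb_add_discountedHit hκ hB hr0 hr1
      (a := fun n x => |kernelOp κ n g x - ∫ y, g y ∂ρ|) (fun n x => (hint _ n).abs)
      (fun x _ => ?_) (fun n x _ => ?_) (fun n => h g c hg hc n) n
  · calc |kernelOp κ 0 g x - ∫ y, g y ∂ρ| ≤ |kernelOp κ 0 g x| + |∫ y, g y ∂ρ| := abs_sub _ _
      _ ≤ 2 * c := by
        linarith [abs_kernelOp_le (κ := κ) hc 0 x, abs_integral_le_of_abs_le (ν := ρ) hc]
  · refine Eq.trans_le ?_ abs_integral_le_integral_abs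
    rw [integral_sub (integrable_of_measurable_of_abs_le (measurable_kernelOp n hg)
        (abs_kernelOp_le hc n)) (integrable_const _),
      kernelOp_succ n (integrable_of_measurable_of_abs_le hg hc)]
    simp

theorem GeometricallyErgodic.exists_integral_abs_kernelOp_sub_le (hκ : Kernel.Invariant κ ρ)
    (hgeo : GeometricallyErgodic κ ρ) :
    ∃ K l : ℝ, 0 ≤ K ∧ 0 < l ∧ l < 1 ∧ ∀ (g : E → ℝ) (c : ℝ), Measurable g → (∀ x, |g x| ≤ c) →
      ∀ n, ∫ x, |kernelOp κ n g x - ∫ y, g y ∂ρ| ∂ρ ≤ c * (K * l ^ n) := by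
  obtain ⟨B, M, r, hB, hρB, hM, hr0, hr1, h⟩ := hgeo.exists_uniformlyErgodicOn
  have hratio : 0 < ρ.real B / (ρ.real B + M) := by positivity
  have hratio1 : ρ.real B / (ρ.real B + M) < 1 := by
    rw [div_lt_one (by positivity)]
    linarith
  refine ⟨2 + M, 1 - (1 - r) * (ρ.real B / (ρ.real B + M)), by positivity, by nlinarith,
    by nlinarith, fun g c hg hc n => ?_⟩
  obtain ⟨x₀⟩ := ρ.nonempty_of_neZero
  have hc0 : 0 ≤ c := (abs_nonneg _).trans (hc x₀)
  have hq : 0 ≤ ∫ x, avoidProb κ B n x ∂ρ := integral_nonneg (avoidProb_nonneg n)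
  have hs : 0 ≤ ∫ x, discountedHit κ B r n x ∂ρ := integral_nonneg (discountedHit_nonneg hr0 n)
  have hdecay := add_le_pow_of_mul_le hρB hM.le hr0 hr1.le
    (integral_discountedHit_add_avoidProb_zero hB hr0 hr1.le (κ := κ) (ν := ρ)).le
    (fun n => integral_discountedHit_add_avoidProb_succ hB hr0 hr1.le n)
    (fun n => h.measureReal_mul_integral_avoidProb_le hκ hB hr0 hr1.le n) n
  calc _ ≤ _ := h.integral_abs_kernelOp_sub_le hκ hB hr0 hr1.le hg hc n
    _ ≤ c * ((2 + M) * (∫ x, discountedHit κ B r n x ∂ρ + ∫ x, avoidProb κ B n x ∂ρ)) := by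
      nlinarith [mul_nonneg hc0 hs, mul_nonneg hc0 (mul_nonneg hM.le hq)]
    _ ≤ _ := by gcongr

end GeometricMixing

section L2Decay

variable {E : Type*} [MeasurableSpace E] {κ : Kernel E E} {ρ : Measure E} {f g : E → ℝ}

/-- The distance in `L²(ρ)` from `P^n f` to the constant `∫ f dρ`. -/
noncomputable def l2Dev (κ : Kernel E E) (ρ : Measure E) (f : E → ℝ) (n : ℕ) : ℝ :=
  √(∫ x, (kernelOp κ n f x - ∫ y, f y ∂ρ) ^ 2 ∂ρ)

theorem l2Dev_nonneg (n : ℕ) : 0 ≤ l2Dev κ ρ f n :=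
  Real.sqrt_nonneg _

theorem l2Dev_sq (n : ℕ) :
    l2Dev κ ρ f n ^ 2 = ∫ x, (kernelOp κ n f x - ∫ y, f y ∂ρ) ^ 2 ∂ρ :=
  Real.sq_sqrt (integral_nonneg fun _ => sq_nonneg _)

theorem memLp_two_kernelOp [IsMarkovKernel κ] (hκ : Kernel.Invariant κ ρ) (hfm : Measurable f)
    (hf : MemLp f 2 ρ) (n : ℕ) : MemLp (kernelOp κ n f) 2 ρ :=
  memLp_two_integral_kernel (invariant_kernelIter hκ n) hfm hf

theorem integral_kernelOp (hκ : Kernel.Invariant κ ρ) (hf : Integrable f ρ) (n : ℕ) :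
    ∫ x, kernelOp κ n f x ∂ρ = ∫ x, f x ∂ρ :=
  integral_integral_of_invariant (invariant_kernelIter hκ n) hf

theorem ae_kernelOp_add (hκ : Kernel.Invariant κ ρ) (hf : Integrable f ρ) (hg : Integrable g ρ)
    (n : ℕ) :
    ∀ᵐ x ∂ρ, kernelOp κ n (fun x => f x + g x) x = kernelOp κ n f x + kernelOp κ n g x := by
  filter_upwards [ae_integrable_of_invariant (invariant_kernelIter hκ n) hf,
    ae_integrable_of_invariant (invariant_kernelIter hκ n) hg] with x hfx hgx
  exact integral_add hfx hgx

theorem integrable_sq_kernelOp_sub_integral [IsMarkovKernel κ] [IsFiniteMeasure ρ]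
    (hκ : Kernel.Invariant κ ρ) (hfm : Measurable f) (hf : MemLp f 2 ρ) (n : ℕ) :
    Integrable (fun x => (kernelOp κ n f x - ∫ y, f y ∂ρ) ^ 2) ρ :=
  ((memLp_two_kernelOp hκ hfm hf n).sub (memLp_const _)).integrable_sq

theorem memLp_two_of_memLp_ofReal [IsFiniteMeasure ρ] {p : ℝ} (hp : 2 < p)
    (hf : MemLp f (ENNReal.ofReal p) ρ) : MemLp f 2 ρ :=
  hf.mono_exponent <| by
    rw [ENNReal.le_ofReal_iff_toReal_le (by simp) (by linarith)]
    simpa using hp.le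

theorem integral_indicator_lt_abs_sq_le {p N : ℝ} (hp : 2 ≤ p) (hN : 0 < N)
    (hfp : Integrable (fun x => |f x| ^ p) ρ) :
    ∫ x, {x | N < |f x|}.indicator f x ^ 2 ∂ρ ≤ N⁻¹ ^ (p - 2) * ∫ x, |f x| ^ p ∂ρ := by
  have hle (x : E) : {x | N < |f x|}.indicator f x ^ 2 ≤ N⁻¹ ^ (p - 2) * |f x| ^ p := by
    by_cases hx : N < |f x|
    · have hone : 1 ≤ (N⁻¹ * |f x|) ^ (p - 2) := by
        refine Real.one_le_rpow ?_ (by linarith)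
        rw [inv_mul_eq_div, le_div_iff₀ hN, one_mul]
        exact hx.le
      calc {x | N < |f x|}.indicator f x ^ 2 = |f x| ^ 2 := by
            rw [Set.indicator_of_mem (by exact hx), sq_abs]
        _ ≤ |f x| ^ 2 * (N⁻¹ * |f x|) ^ (p - 2) := le_mul_of_one_le_right (sq_nonneg _) hone
        _ = N⁻¹ ^ (p - 2) * (|f x| ^ (2 : ℝ) * |f x| ^ (p - 2)) := by
          rw [Real.mul_rpow (by positivity) (abs_nonneg _), Real.rpow_two]
          ring
        _ = N⁻¹ ^ (p - 2) * |f x| ^ p := by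
          rw [← Real.rpow_add (hN.trans hx), add_sub_cancel]
    · rw [Set.indicator_of_notMem (by exact hx), zero_pow two_ne_zero]
      positivity
  rw [← integral_const_mul]
  exact integral_mono_of_nonneg (ae_of_all _ fun x => sq_nonneg _) (hfp.const_mul _)
    (ae_of_all _ hle)

variable [IsMarkovKernel κ] [IsProbabilityMeasure ρ]

theorem l2Dev_sq_le_integral_sq (hκ : Kernel.Invariant κ ρ) (hfm : Measurable f)
    (hf : MemLp f 2 ρ) (n : ℕ) : l2Dev κ ρ f n ^ 2 ≤ ∫ x, f x ^ 2 ∂ρ :=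
  calc l2Dev κ ρ f n ^ 2 = variance (kernelOp κ n f) ρ := by
        rw [l2Dev_sq, variance_eq_integral (measurable_kernelOp n hfm).aemeasurable,
          integral_kernelOp hκ (hf.integrable one_le_two)]
    _ ≤ ∫ x, kernelOp κ n f x ^ 2 ∂ρ :=
        variance_le_expectation_sq (measurable_kernelOp n hfm).aestronglyMeasurable
    _ ≤ ∫ x, f x ^ 2 ∂ρ := integral_sq_integral_kernel_le (invariant_kernelIter hκ n) hfm hf

theorem l2Dev_add_sq_le (hκ : Kernel.Invariant κ ρ) (hfm : Measurable f) (hf : MemLp f 2 ρ)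
    (hgm : Measurable g) (hg : MemLp g 2 ρ) (n : ℕ) :
    l2Dev κ ρ (fun x => f x + g x) n ^ 2 ≤ 2 * l2Dev κ ρ f n ^ 2 + 2 * l2Dev κ ρ g n ^ 2 := by
  have hfi := hf.integrable one_le_two
  have hgi := hg.integrable one_le_two
  have hF := integrable_sq_kernelOp_sub_integral hκ hfm hf n
  have hG := integrable_sq_kernelOp_sub_integral hκ hgm hg n
  rw [l2Dev_sq, l2Dev_sq, l2Dev_sq, ← integral_const_mul, ← integral_const_mul,
    ← integral_add (hF.const_mul 2) (hG.const_mul 2)]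
  refine integral_mono_of_nonneg (ae_of_all _ fun x => sq_nonneg _)
    ((hF.const_mul 2).add (hG.const_mul 2)) ?_
  filter_upwards [ae_kernelOp_add hκ hfi hgi n] with x hx
  rw [hx, integral_add hfi hgi, add_sub_add_comm]
  linarith [add_sq_le (a := kernelOp κ n f x - ∫ y, f y ∂ρ) (b := kernelOp κ n g x - ∫ y, g y ∂ρ)]

theorem l2Dev_sq_le_mul_integral_abs {c : ℝ} (hfm : Measurable f) (hc : ∀ x, |f x| ≤ c) (n : ℕ) :
    l2Dev κ ρ f n ^ 2 ≤ 2 * c * ∫ x, |kernelOp κ n f x - ∫ y, f y ∂ρ| ∂ρ := by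
  have hint : Integrable (fun x => kernelOp κ n f x - ∫ y, f y ∂ρ) ρ :=
    (integrable_of_measurable_of_abs_le (measurable_kernelOp n hfm) (abs_kernelOp_le hc n)).sub
      (integrable_const _)
  rw [l2Dev_sq, ← integral_const_mul]
  refine integral_mono_of_nonneg (ae_of_all _ fun x => sq_nonneg _) (hint.abs.const_mul _)
    (ae_of_all _ fun x => ?_)
  have habs : |kernelOp κ n f x - ∫ y, f y ∂ρ| ≤ 2 * c :=
    (abs_sub _ _).trans <| by
      linarith [abs_kernelOp_le (κ := κ) hc n x, abs_integral_le_of_abs_le (ν := ρ) hc]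
  calc (kernelOp κ n f x - ∫ y, f y ∂ρ) ^ 2
      = |kernelOp κ n f x - ∫ y, f y ∂ρ| * |kernelOp κ n f x - ∫ y, f y ∂ρ| := by
        rw [← sq, sq_abs]
    _ ≤ 2 * c * |kernelOp κ n f x - ∫ y, f y ∂ρ| := by gcongr

-- `f` is truncated at level `N`: mixing handles the bounded part, the `p`-th moment the tail.
theorem l2Dev_sq_le_of_truncation {p K l N : ℝ} (hκ : Kernel.Invariant κ ρ)
    (hmix : ∀ (g : E → ℝ) (c : ℝ), Measurable g → (∀ x, |g x| ≤ c) →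
      ∀ n, ∫ x, |kernelOp κ n g x - ∫ y, g y ∂ρ| ∂ρ ≤ c * (K * l ^ n))
    (hp : 2 ≤ p) (hfm : Measurable f) (hf : MemLp f 2 ρ)
    (hfp : Integrable (fun x => |f x| ^ p) ρ) (hN : 0 < N) (n : ℕ) :
    l2Dev κ ρ f n ^ 2 ≤
      4 * K * N ^ 2 * l ^ n + 2 * (N⁻¹ ^ (p - 2) * ∫ x, |f x| ^ p ∂ρ) := by
  let T : Set E := {x | N < |f x|}
  have hT : MeasurableSet T := measurableSet_lt measurable_const hfm.abs
  have hbdd (x : E) : |Tᶜ.indicator f x| ≤ N := by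
    by_cases hx : x ∈ T
    · simpa [hx] using hN.le
    · simpa [hx] using not_lt.1 hx
  have hsplit : f = fun x => Tᶜ.indicator f x + T.indicator f x :=
    (Set.indicator_compl_add_self T f).symm
  calc l2Dev κ ρ f n ^ 2 = l2Dev κ ρ (fun x => Tᶜ.indicator f x + T.indicator f x) n ^ 2 := by
        rw [← hsplit]
    _ ≤ 2 * l2Dev κ ρ (Tᶜ.indicator f) n ^ 2 + 2 * l2Dev κ ρ (T.indicator f) n ^ 2 :=
        l2Dev_add_sq_le hκ (hfm.indicator hT.compl) (hf.indicator hT.compl) (hfm.indicator hT)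
          (hf.indicator hT) n
    _ ≤ 2 * (2 * N * (N * (K * l ^ n))) + 2 * ∫ x, T.indicator f x ^ 2 ∂ρ := by
        gcongr
        · exact (l2Dev_sq_le_mul_integral_abs (hfm.indicator hT.compl) hbdd n).trans <| by
            gcongr
            exact hmix _ _ (hfm.indicator hT.compl) hbdd n
        · exact l2Dev_sq_le_integral_sq hκ (hfm.indicator hT) (hf.indicator hT) n
    _ ≤ 2 * (2 * N * (N * (K * l ^ n))) + 2 * (N⁻¹ ^ (p - 2) * ∫ x, |f x| ^ p ∂ρ) := by
        gcongr
        exact integral_indicator_lt_abs_sq_le hp hN hfp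
    _ = _ := by ring

theorem GeometricallyErgodic.exists_l2Dev_sq_le {p : ℝ} (hκ : Kernel.Invariant κ ρ)
    (hgeo : GeometricallyErgodic κ ρ) (hp : 2 < p) (hfm : Measurable f)
    (hf : MemLp f (ENNReal.ofReal p) ρ) :
    ∃ A b : ℝ, 0 ≤ A ∧ 0 ≤ b ∧ b < 1 ∧ ∀ n, l2Dev κ ρ f n ^ 2 ≤ A * b ^ n := by
  obtain ⟨K, l, hK, hl0, hl1, hmix⟩ := hgeo.exists_integral_abs_kernelOp_sub_le hκ
  have hfp : Integrable (fun x => |f x| ^ p) ρ := by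
    simpa [ENNReal.toReal_ofReal (by linarith : 0 ≤ p)] using
      hf.integrable_norm_rpow (by simp; linarith) ENNReal.ofReal_ne_top
  have : 0 ≤ ∫ x, |f x| ^ p ∂ρ := integral_nonneg fun x => by positivity
  -- Truncating at `q⁻¹ ^ n` balances `N ^ 2 * l ^ n` against `N ^ (2 - p)`.
  let q : ℝ := √(√l)
  have hq0 : 0 < q := by positivity
  have hq1 : q < 1 := by
    rw [Real.sqrt_lt' one_pos, one_pow, Real.sqrt_lt' one_pos]
    simpa using hl1
  have hql : q ^ 4 = l := by
    rw [show 4 = 2 * 2 from rfl, pow_mul, Real.sq_sqrt (by positivity), Real.sq_sqrt hl0.le]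
  refine ⟨4 * K + 2 * ∫ x, |f x| ^ p ∂ρ, max (q ^ 2) (q ^ (p - 2)), by positivity, by positivity,
    max_lt (by nlinarith) (Real.rpow_lt_one hq0.le hq1 (by linarith)), fun n => ?_⟩
  have hbody : (q⁻¹ ^ n) ^ 2 * l ^ n = (q ^ 2) ^ n := by
    rw [← hql, ← pow_mul, mul_comm n 2, pow_mul, ← mul_pow]
    congr 1
    field_simp
  have htail : (q⁻¹ ^ n)⁻¹ ^ (p - 2) = (q ^ (p - 2)) ^ n := by
    rw [inv_pow, inv_inv, ← Real.rpow_mul_natCast hq0.le, mul_comm, Real.rpow_natCast_mul hq0.le]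
  calc l2Dev κ ρ f n ^ 2 ≤ _ := l2Dev_sq_le_of_truncation hκ hmix hp.le hfm
        (memLp_two_of_memLp_ofReal hp hf) hfp (N := q⁻¹ ^ n) (by positivity) n
    _ = 4 * K * (q ^ 2) ^ n + 2 * ((q ^ (p - 2)) ^ n * ∫ x, |f x| ^ p ∂ρ) := by
        rw [mul_assoc (4 * K), hbody, htail]
    _ ≤ 4 * K * max (q ^ 2) (q ^ (p - 2)) ^ n +
          2 * (max (q ^ 2) (q ^ (p - 2)) ^ n * ∫ x, |f x| ^ p ∂ρ) := by
        gcongr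
        · exact le_max_left _ _
        · exact le_max_right _ _
    _ = _ := by ring

theorem GeometricallyErgodic.summable_l2Dev {p : ℝ} (hκ : Kernel.Invariant κ ρ)
    (hgeo : GeometricallyErgodic κ ρ) (hp : 2 < p) (hfm : Measurable f)
    (hf : MemLp f (ENNReal.ofReal p) ρ) : Summable (l2Dev κ ρ f) := by
  obtain ⟨A, b, hA, hb0, hb1, h⟩ := hgeo.exists_l2Dev_sq_le hκ hp hfm hf
  have hsqrt1 : √b < 1 := by rwa [Real.sqrt_lt' one_pos, one_pow]
  refine Summable.of_nonneg_of_le l2Dev_nonneg (fun n => ?_)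
    ((summable_geometric_of_lt_one (Real.sqrt_nonneg b) hsqrt1).mul_left √A)
  have hsq : (√A * √b ^ n) ^ 2 = A * b ^ n := by
    rw [mul_pow, Real.sq_sqrt hA, ← pow_mul, mul_comm n, pow_mul, Real.sq_sqrt hb0]
  exact (pow_le_pow_iff_left₀ (l2Dev_nonneg n) (by positivity) two_ne_zero).1
    ((h n).trans_eq hsq.symm)

end L2Decay

section AsymptoticCovariance

theorem summable_natAbs {c : ℕ → ℝ} (hc : Summable c) : Summable fun j : ℤ => c j.natAbs :=
  Summable.of_nat_of_neg (by simpa using hc) (by simpa using hc)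

theorem tsum_natAbs {c : ℕ → ℝ} (hc : Summable c) :
    ∑' j : ℤ, c j.natAbs = 2 * ∑' n, c n - c 0 := by
  have hpos : HasSum (fun n : ℕ => c (n : ℤ).natAbs) (∑' n, c n) := by simpa using hc.hasSum
  have hneg : HasSum (fun n : ℕ => c (-(n : ℤ)).natAbs) (∑' n, c n) := by simpa using hc.hasSum
  rw [(HasSum.of_nat_of_neg (f := fun j : ℤ => c j.natAbs) hpos hneg).tsum_eq, Int.natAbs_zero]
  ring

variable {E : Type*} [MeasurableSpace E] {κ : Kernel E E} {ρ : Measure E} {f g : E → ℝ}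

theorem abs_integral_mul_le_sqrt (hf : MemLp f 2 ρ) (hg : MemLp g 2 ρ) :
    |∫ x, f x * g x ∂ρ| ≤ √(∫ x, f x ^ 2 ∂ρ) * √(∫ x, g x ^ 2 ∂ρ) := by
  have holder := integral_mul_norm_le_Lp_mul_Lq (μ := ρ) (f := f) (g := g)
    Real.HolderConjugate.two_two (by simpa using hf) (by simpa using hg)
  simp only [← Real.sqrt_eq_rpow, Real.norm_eq_abs, Real.rpow_two, sq_abs] at holder
  calc |∫ x, f x * g x ∂ρ| ≤ ∫ x, |f x * g x| ∂ρ := abs_integral_le_integral_abs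
    _ = ∫ x, |f x| * |g x| ∂ρ := by simp_rw [abs_mul]
    _ ≤ _ := holder

variable (κ ρ f g) in
/-- The asymptotic covariance `∑_{j ∈ ℤ} Cov_ρ(f(X_0), g(X_{|j|}))` of the functionals `f` and `g`
along the stationary chain. -/
noncomputable def asympCov : ℝ :=
  ∑' j : ℤ, kernelCov κ ρ f g j.natAbs

theorem abs_kernelCov_le [IsMarkovKernel κ] [IsFiniteMeasure ρ] (hκ : Kernel.Invariant κ ρ)
    (hf : MemLp f 2 ρ) (hgm : Measurable g) (hg : MemLp g 2 ρ) (n : ℕ) :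
    |kernelCov κ ρ f g n| ≤ √(∫ x, f x ^ 2 ∂ρ) * l2Dev κ ρ g n := by
  have hPg := memLp_two_kernelOp hκ hgm hg n
  have hcentre : kernelCov κ ρ f g n = ∫ x, f x * (kernelOp κ n g x - ∫ y, g y ∂ρ) ∂ρ := by
    have hfPg : Integrable (fun x => f x * kernelOp κ n g x) ρ := hf.integrable_mul hPg
    simp_rw [mul_sub]
    rw [integral_sub hfPg ((hf.integrable one_le_two).mul_const _), integral_mul_const, kernelCov]
  rw [hcentre]
  exact abs_integral_mul_le_sqrt hf (hPg.sub (memLp_const _))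

theorem summable_kernelCov [IsMarkovKernel κ] [IsFiniteMeasure ρ]
    (hκ : Kernel.Invariant κ ρ) (hf : MemLp f 2 ρ) (hgm : Measurable g) (hg : MemLp g 2 ρ)
    (hsum : Summable (l2Dev κ ρ g)) : Summable (kernelCov κ ρ f g) :=
  Summable.of_norm_bounded (hsum.mul_left _) (abs_kernelCov_le hκ hf hgm hg)

theorem kernelCov_sub_const_mul [IsMarkovKernel κ] [IsFiniteMeasure ρ]
    (hκ : Kernel.Invariant κ ρ) (hfm : Measurable f) (hf : MemLp f 2 ρ) (hgm : Measurable g)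
    (hg : MemLp g 2 ρ) (c : ℝ) (n : ℕ) :
    kernelCov κ ρ (fun x => f x - c * g x) (fun x => f x - c * g x) n =
      kernelCov κ ρ f f n + c ^ 2 * kernelCov κ ρ g g n
        - c * (kernelCov κ ρ f g n + kernelCov κ ρ g f n) := by
  have hPf := memLp_two_kernelOp hκ hfm hf n
  have hPg := memLp_two_kernelOp hκ hgm hg n
  have hfi := hf.integrable one_le_two
  have hgi := hg.integrable one_le_two
  have hη := invariant_kernelIter hκ n
  have hff : Integrable (fun x => f x * kernelOp κ n f x) ρ := hf.integrable_mul hPf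
  have hfg : Integrable (fun x => f x * kernelOp κ n g x) ρ := hf.integrable_mul hPg
  have hgf : Integrable (fun x => g x * kernelOp κ n f x) ρ := hg.integrable_mul hPf
  have hgg : Integrable (fun x => g x * kernelOp κ n g x) ρ := hg.integrable_mul hPg
  have hexpand : ∫ x, (f x - c * g x) * kernelOp κ n (fun x => f x - c * g x) x ∂ρ =
      ∫ x, f x * kernelOp κ n f x + c ^ 2 * (g x * kernelOp κ n g x)
        - c * (f x * kernelOp κ n g x + g x * kernelOp κ n f x) ∂ρ := by
    refine integral_congr_ae ?_
    filter_upwards [ae_integrable_of_invariant hη hfi, ae_integrable_of_invariant hη hgi]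
      with x hfx hgx
    have hlin : kernelOp κ n (fun x => f x - c * g x) x
        = kernelOp κ n f x - c * kernelOp κ n g x := by
      simp only [kernelOp, integral_sub hfx (hgx.const_mul c), integral_const_mul]
    rw [hlin]
    ring
  rw [kernelCov, hexpand, integral_sub, integral_add, integral_const_mul, integral_const_mul,
    integral_add, integral_sub hfi (hgi.const_mul c), integral_const_mul]
  · simp only [kernelCov]
    ring
  all_goals fun_prop

theorem asympCov_sub_const_mul [IsMarkovKernel κ] [IsFiniteMeasure ρ]
    (hκ : Kernel.Invariant κ ρ) (hfm : Measurable f) (hf : MemLp f 2 ρ)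
    (hfs : Summable (l2Dev κ ρ f)) (hgm : Measurable g) (hg : MemLp g 2 ρ)
    (hgs : Summable (l2Dev κ ρ g)) (c : ℝ) :
    asympCov κ ρ (fun x => f x - c * g x) (fun x => f x - c * g x) =
      asympCov κ ρ f f + c ^ 2 * asympCov κ ρ g g
        - c * (asympCov κ ρ f g + asympCov κ ρ g f) := by
  have hff := summable_natAbs (summable_kernelCov hκ hf hfm hf hfs)
  have hfg := summable_natAbs (summable_kernelCov hκ hf hgm hg hgs)
  have hgf := summable_natAbs (summable_kernelCov hκ hg hfm hf hfs)
  have hgg := summable_natAbs (summable_kernelCov hκ hg hgm hg hgs)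
  simp only [asympCov, kernelCov_sub_const_mul hκ hfm hf hgm hg c]
  rw [(hff.add (hgg.mul_left _)).tsum_sub ((hfg.add hgf).mul_left _),
    hff.tsum_add (hgg.mul_left _), tsum_mul_left, tsum_mul_left, hfg.tsum_add hgf]

end AsymptoticCovariance

section Poisson

theorem norm_sq_eq_integral_sq {α : Type*} [MeasurableSpace α] {ν : Measure α} (g : Lp ℝ 2 ν) :
    ‖g‖ ^ 2 = ∫ x, g x ^ 2 ∂ν := by
  rw [← real_inner_self_eq_norm_sq, L2.inner_def]
  simp [sq]

theorem add_map_tsum_pow {V : Type*} [NormedAddCommGroup V] [NormedSpace ℝ V] (T : V →L[ℝ] V)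
    {v : V} (hv : Summable fun n => (T ^ n) v) :
    v + T (∑' n, (T ^ n) v) = ∑' n, (T ^ n) v := by
  conv_rhs => rw [hv.tsum_eq_zero_add]
  rw [T.map_tsum hv]
  simp [pow_succ']

theorem norm_sq_sub_norm_map_tsum_pow_sq {V : Type*} [NormedAddCommGroup V]
    [InnerProductSpace ℝ V] (T : V →L[ℝ] V) {v : V} (hv : Summable fun n => (T ^ n) v) :
    ‖∑' n, (T ^ n) v‖ ^ 2 - ‖T (∑' n, (T ^ n) v)‖ ^ 2 =
      2 * ∑' n, inner ℝ v ((T ^ n) v) - ‖v‖ ^ 2 := by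
  have hinner : ∑' n, inner ℝ v ((T ^ n) v) = inner ℝ v (∑' n, (T ^ n) v) :=
    ((innerSL ℝ v).map_tsum hv).symm
  rw [hinner, eq_sub_of_add_eq' (add_map_tsum_pow T hv), norm_sub_sq_real, real_inner_comm]
  ring

variable {E : Type*} [MeasurableSpace E] {κ η : Kernel E E} {ρ : Measure E} {f : E → ℝ}

theorem memLp_two_integral_kernel_coeFn [IsMarkovKernel η] (hη : Kernel.Invariant η ρ)
    (g : Lp ℝ 2 ρ) : MemLp (fun x => ∫ y, g y ∂η x) 2 ρ :=
  memLp_two_integral_kernel hη (Lp.stronglyMeasurable g).measurable (Lp.memLp g)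

variable [IsMarkovKernel κ] [IsFiniteMeasure ρ]

/-- The contraction `g ↦ ∫ g(y) η(·, dy)` of `L²(ρ)` induced by a Markov kernel `η` preserving
`ρ`. -/
noncomputable def kernelLp (η : Kernel E E) [IsMarkovKernel η] (hη : Kernel.Invariant η ρ) :
    Lp ℝ 2 ρ →L[ℝ] Lp ℝ 2 ρ :=
  LinearMap.mkContinuous
    { toFun := fun g => (memLp_two_integral_kernel_coeFn hη g).toLp _
      map_add' := fun g k => by
        rw [← MemLp.toLp_add]
        refine MemLp.toLp_congr _ _ ?_
        filter_upwards [ae_ae_of_invariant hη (Lp.coeFn_add g k),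
          ae_integrable_of_invariant hη ((Lp.memLp g).integrable one_le_two),
          ae_integrable_of_invariant hη ((Lp.memLp k).integrable one_le_two)] with x hadd hg hk
        rw [integral_congr_ae hadd]
        exact integral_add hg hk
      map_smul' := fun c g => by
        rw [← MemLp.toLp_const_smul]
        refine MemLp.toLp_congr _ _ ?_
        filter_upwards [ae_ae_of_invariant hη (Lp.coeFn_smul c g)] with x hsmul
        rw [integral_congr_ae hsmul]
        exact integral_smul c _ } 1 fun g => by
    refine (sq_le_sq₀ (norm_nonneg _) (by positivity)).1 ?_
    simp only [LinearMap.coe_mk, AddHom.coe_mk, one_mul]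
    rw [norm_sq_eq_integral_sq, norm_sq_eq_integral_sq,
      integral_congr_ae ((MemLp.coeFn_toLp (memLp_two_integral_kernel_coeFn hη g)).fun_pow_const 2)]
    exact integral_sq_integral_kernel_le hη (Lp.stronglyMeasurable g).measurable (Lp.memLp g)

theorem coeFn_kernelLp [IsMarkovKernel η] (hη : Kernel.Invariant η ρ) (g : Lp ℝ 2 ρ) :
    kernelLp η hη g =ᵐ[ρ] fun x => ∫ y, g y ∂η x :=
  MemLp.coeFn_toLp (memLp_two_integral_kernel_coeFn hη g)

theorem coeFn_kernelLp_pow_toLp (hκ : Kernel.Invariant κ ρ) (hfm : Measurable f)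
    (hf : MemLp f 2 ρ) (n : ℕ) : (kernelLp κ hκ ^ n) (hf.toLp f) =ᵐ[ρ] kernelOp κ n f := by
  induction n with
  | zero => simpa [kernelOp_zero hfm] using hf.coeFn_toLp
  | succ n ih =>
    rw [pow_succ', mul_apply_eq_comp]
    filter_upwards [coeFn_kernelLp hκ ((kernelLp κ hκ ^ n) (hf.toLp f)), ae_ae_of_invariant hκ ih,
      ae_integrable_of_invariant (invariant_kernelIter hκ (n + 1)) (hf.integrable one_le_two)]
      with x hLp hpow hint
    rw [hLp, kernelOp_succ n hint]
    exact integral_congr_ae hpow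

theorem norm_kernelLp_pow_toLp (hκ : Kernel.Invariant κ ρ) (hfm : Measurable f)
    (hf : MemLp f 2 ρ) (hf0 : ∫ x, f x ∂ρ = 0) (n : ℕ) :
    ‖(kernelLp κ hκ ^ n) (hf.toLp f)‖ = l2Dev κ ρ f n := by
  rw [← Real.sqrt_sq (norm_nonneg _), norm_sq_eq_integral_sq, l2Dev, hf0,
    integral_congr_ae ((coeFn_kernelLp_pow_toLp hκ hfm hf n).fun_pow_const 2)]
  simp only [sub_zero]

theorem inner_kernelLp_pow_toLp (hκ : Kernel.Invariant κ ρ) (hfm : Measurable f)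
    (hf : MemLp f 2 ρ) (hf0 : ∫ x, f x ∂ρ = 0) (n : ℕ) :
    inner ℝ (hf.toLp f) ((kernelLp κ hκ ^ n) (hf.toLp f)) = kernelCov κ ρ f f n := by
  rw [kernelCov, hf0, zero_mul, sub_zero, L2.inner_def]
  refine integral_congr_ae ?_
  filter_upwards [coeFn_kernelLp_pow_toLp hκ hfm hf n, hf.coeFn_toLp] with x hpow hx
  rw [hpow, hx, RCLike.inner_apply, conj_trivial, mul_comm]

theorem exists_poisson_solution (hκ : Kernel.Invariant κ ρ) (hfm : Measurable f)
    (hf : MemLp f 2 ρ) (hf0 : ∫ x, f x ∂ρ = 0) (hsum : Summable (l2Dev κ ρ f)) :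
    ∃ F : E → ℝ, Measurable F ∧ MemLp F 2 ρ ∧ (∀ᵐ x ∂ρ, f x = F x - ∫ y, F y ∂κ x) ∧
      ∫ x, F x ^ 2 ∂ρ - ∫ x, (∫ y, F y ∂κ x) ^ 2 ∂ρ = asympCov κ ρ f f := by
  set T := kernelLp κ hκ
  set φ : Lp ℝ 2 ρ := hf.toLp f
  have hsummable : Summable fun n => (T ^ n) φ :=
    Summable.of_norm (by simpa only [norm_kernelLp_pow_toLp hκ hfm hf hf0, T, φ] using hsum)
  set Φ : Lp ℝ 2 ρ := ∑' n, (T ^ n) φ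
  have hTΦ : T Φ =ᵐ[ρ] fun x => ∫ y, Φ y ∂κ x := coeFn_kernelLp hκ Φ
  refine ⟨Φ, (Lp.stronglyMeasurable Φ).measurable, Lp.memLp Φ, ?_, ?_⟩
  · have hadd := Lp.coeFn_add φ (T Φ)
    rw [add_map_tsum_pow T hsummable] at hadd
    filter_upwards [hadd, hTΦ, hf.coeFn_toLp] with x hΦx hTΦx hφx
    rw [← hTΦx, hΦx, Pi.add_apply, hφx, add_sub_cancel_right]
  · have hcov (n : ℕ) : inner ℝ φ ((T ^ n) φ) = kernelCov κ ρ f f n :=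
      inner_kernelLp_pow_toLp hκ hfm hf hf0 n
    have hzero : ‖φ‖ ^ 2 = kernelCov κ ρ f f 0 := by
      rw [← hcov 0, ← real_inner_self_eq_norm_sq, pow_zero, one_apply_eq_self]
    rw [← integral_congr_ae (hTΦ.fun_pow_const 2), ← norm_sq_eq_integral_sq,
      ← norm_sq_eq_integral_sq, norm_sq_sub_norm_map_tsum_pow_sq T hsummable, hzero, asympCov,
      tsum_natAbs (summable_kernelCov hκ hf hfm hf hsum)]
    simp only [hcov]

end Poisson

section ChainLaw

variable {Ω E : Type*} [MeasurableSpace E]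

/-- The path `(X 0, …, X n)`. -/
def pastPath (X : ℕ → Ω → E) (n : ℕ) (ω : Ω) (i : Fin (n + 1)) : E :=
  X i ω

/-- The σ-algebra generated by `X 0, …, X n`, as it appears in `IsMarkovChain`. -/
abbrev pastSigma (X : ℕ → Ω → E) (n : ℕ) : MeasurableSpace Ω :=
  MeasurableSpace.comap (pastPath X n) MeasurableSpace.pi

variable {X : ℕ → Ω → E}

theorem measurable_of_le_pastSigma {k n : ℕ} (hk : k ≤ n) : Measurable[pastSigma X n] (X k) := by
  have hpath : Measurable[pastSigma X n] (pastPath X n) := comap_measurable _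
  exact (measurable_pi_apply (⟨k, Nat.lt_succ_of_le hk⟩ : Fin (n + 1))).comp hpath

theorem pastSigma_mono {m n : ℕ} (hmn : m ≤ n) : pastSigma X m ≤ pastSigma X n := by
  rw [pastSigma, ← measurable_iff_comap_le]
  exact @measurable_pi_lambda _ _ _ (pastSigma X n) _ _ fun i =>
    measurable_of_le_pastSigma ((Nat.lt_succ_iff.1 i.2).trans hmn)

variable [mΩ : MeasurableSpace Ω]

theorem measurable_pastPath (hX : ∀ n, Measurable (X n)) (n : ℕ) : Measurable (pastPath X n) :=
  measurable_pi_lambda _ fun i => hX i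

theorem pastSigma_le (hX : ∀ n, Measurable (X n)) (n : ℕ) : pastSigma X n ≤ mΩ :=
  (measurable_pastPath hX n).comap_le

variable {P : Measure Ω} [IsProbabilityMeasure P] {κ : Kernel E E} {ρ : Measure E}

theorem isProbabilityMeasure_of_map_eq (hchain : IsMarkovChain P X κ)
    (hstat : ∀ n, P.map (X n) = ρ) : IsProbabilityMeasure ρ :=
  hstat 0 ▸ Measure.isProbabilityMeasure_map (hchain.1 0).aemeasurable

theorem map_prodMk_eq_compProd {α : Type*} [MeasurableSpace α] {η : Kernel α E}
    [IsMarkovKernel η] {U : Ω → α} {V : Ω → E} (hU : Measurable U) (hV : Measurable V)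
    (h : ∀ A B, MeasurableSet A → MeasurableSet B →
      ∫ ω in U ⁻¹' A, (η (U ω)).real B ∂P = P.real (U ⁻¹' A ∩ V ⁻¹' B)) :
    P.map (fun ω => (U ω, V ω)) = P.map U ⊗ₘ η := by
  have := Measure.isProbabilityMeasure_map (μ := P) hU.aemeasurable
  have := Measure.isProbabilityMeasure_map (μ := P) (hU.prodMk hV).aemeasurable
  refine Measure.ext_prod fun {A B} hA hB => ?_
  rw [Measure.map_apply (hU.prodMk hV) (hA.prod hB), Set.mk_preimage_prod,
    Measure.compProd_apply_prod hA hB, setLIntegral_map hA (Kernel.measurable_coe _ hB) hU,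
    ← ENNReal.toReal_eq_toReal_iff' (measure_ne_top _ _)]
  · have htoReal := integral_toReal (μ := P.restrict (U ⁻¹' A))
      ((Kernel.measurable_coe η hB).comp hU).aemeasurable (ae_of_all _ fun ω => measure_lt_top _ _)
    exact (h A B hA hB).symm.trans htoReal
  · exact ((lintegral_mono fun ω => (prob_le_one : η (U ω) B ≤ 1)).trans_lt (by simp)).ne

theorem setIntegral_transition (hchain : IsMarkovChain P X κ) (n : ℕ) {s : Set Ω} {B : Set E}
    (hs : MeasurableSet[pastSigma X n] s) (hB : MeasurableSet B) :
    ∫ ω in s, (κ (X n ω)).real B ∂P = P.real (s ∩ X (n + 1) ⁻¹' B) := by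
  have hle := pastSigma_le hchain.1 n
  have hnext := hchain.1 (n + 1) hB
  have hind : (fun ω => B.indicator (fun _ => (1 : ℝ)) (X (n + 1) ω)) =
      (X (n + 1) ⁻¹' B).indicator 1 := rfl
  calc ∫ ω in s, (κ (X n ω)).real B ∂P
      = ∫ ω in s, P[fun ω => B.indicator (fun _ => (1 : ℝ)) (X (n + 1) ω) | pastSigma X n] ω ∂P :=
        setIntegral_congr_ae (hle s hs) ((hchain.2 n B hB).mono fun ω hω _ => hω.symm)
    _ = ∫ ω in s, (X (n + 1) ⁻¹' B).indicator 1 ω ∂P := by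
        rw [setIntegral_condExp hle _ hs, hind]
        rw [hind]
        exact (integrable_const 1).indicator hnext
    _ = P.real (s ∩ X (n + 1) ⁻¹' B) := by
        rw [integral_indicator_one hnext, measureReal_restrict_apply hnext, Set.inter_comm]

variable [IsMarkovKernel κ]

theorem map_pastPath_prodMk_next (hchain : IsMarkovChain P X κ) (n : ℕ) :
    P.map (fun ω => (pastPath X n ω, X (n + 1) ω)) =
      P.map (pastPath X n) ⊗ₘ
        κ.comap (fun path : Fin (n + 1) → E => path (Fin.last n)) (measurable_pi_apply _) :=
  map_prodMk_eq_compProd (measurable_pastPath hchain.1 n) (hchain.1 _) fun A _ hA hB =>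
    setIntegral_transition hchain n ⟨A, hA, rfl⟩ hB

theorem map_prodMk_next (hchain : IsMarkovChain P X κ) (hstat : ∀ n, P.map (X n) = ρ) (n : ℕ) :
    P.map (fun ω => (X n ω, X (n + 1) ω)) = ρ ⊗ₘ κ := by
  rw [← hstat n]
  exact map_prodMk_eq_compProd (hchain.1 n) (hchain.1 _) fun A _ hA hB =>
    setIntegral_transition hchain n (measurable_of_le_pastSigma le_rfl hA) hB

theorem invariant_of_isMarkovChain (hchain : IsMarkovChain P X κ)
    (hstat : ∀ n, P.map (X n) = ρ) : Kernel.Invariant κ ρ := by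
  have := isProbabilityMeasure_of_map_eq hchain hstat
  rw [Kernel.Invariant, ← Measure.snd_compProd, ← map_prodMk_next hchain hstat 0,
    Measure.snd_map_prodMk (hchain.1 0), hstat]

theorem integral_mul_transition (hchain : IsMarkovChain P X κ) (hstat : ∀ n, P.map (X n) = ρ)
    {n : ℕ} {Z : Ω → ℂ} (hZ : Measurable[pastSigma X n] Z) (hZ1 : ∀ ω, ‖Z ω‖ ≤ 1)
    {Φ : E × E → ℝ} (hΦm : Measurable Φ) (hΦ : Integrable Φ (ρ ⊗ₘ κ)) :
    ∫ ω, Z ω * (Φ (X n ω, X (n + 1) ω) : ℝ) ∂P =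
      ∫ ω, Z ω * ((∫ y, Φ (X n ω, y) ∂κ (X n ω) : ℝ) : ℂ) ∂P := by
  have hpath := measurable_pastPath hchain.1 n
  have hpair := hpath.prodMk (hchain.1 (n + 1))
  have := Measure.isProbabilityMeasure_map (μ := P) hpath.aemeasurable
  obtain ⟨z, hz, rfl⟩ := hZ.exists_eq_measurable_comp
  let Ψ : (Fin (n + 1) → E) × E → ℂ := fun p => z p.1 * (Φ (p.1 (Fin.last n), p.2) : ℝ)
  have hΨ : Measurable Ψ := by fun_prop
  have hint : Integrable Ψ (P.map fun ω => (pastPath X n ω, X (n + 1) ω)) := by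
    rw [integrable_map_measure hΨ.aestronglyMeasurable hpair.aemeasurable]
    rw [← map_prodMk_next hchain hstat n, integrable_map_measure hΦm.aestronglyMeasurable
      ((hchain.1 _).prodMk (hchain.1 _)).aemeasurable] at hΦ
    exact hΦ.ofReal.bdd_mul (c := 1) (hz.comp hpath).aestronglyMeasurable (ae_of_all _ hZ1)
  calc ∫ ω, (z ∘ pastPath X n) ω * (Φ (X n ω, X (n + 1) ω) : ℝ) ∂P
      = ∫ p, Ψ p ∂(P.map fun ω => (pastPath X n ω, X (n + 1) ω)) :=
        (integral_map hpair.aemeasurable hΨ.aestronglyMeasurable).symm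
    _ = ∫ path, ∫ y, Ψ (path, y) ∂κ (path (Fin.last n)) ∂(P.map (pastPath X n)) := by
        rw [map_pastPath_prodMk_next hchain n] at hint ⊢
        exact Measure.integral_compProd hint
    _ = ∫ ω, ∫ y, Ψ (pastPath X n ω, y) ∂κ (X n ω) ∂P := by
        rw [map_pastPath_prodMk_next hchain n] at hint
        exact integral_map hpath.aemeasurable hint.1.integral_kernel_compProd
    _ = _ := by
        simp only [Ψ, integral_const_mul, integral_complex_ofReal]
        rfl

theorem integral_mul_kernelOp (hchain : IsMarkovChain P X κ) (hstat : ∀ n, P.map (X n) = ρ)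
    {m : ℕ} {Z : Ω → ℂ} (hZ : Measurable[pastSigma X m] Z) (hZ1 : ∀ ω, ‖Z ω‖ ≤ 1) (a : ℕ)
    {g : E → ℝ} (hg : Measurable g) {c : ℝ} (hc : ∀ x, |g x| ≤ c) :
    ∫ ω, Z ω * (g (X (m + a) ω) : ℝ) ∂P = ∫ ω, Z ω * (kernelOp κ a g (X m ω) : ℝ) ∂P := by
  have := isProbabilityMeasure_of_map_eq hchain hstat
  induction a generalizing g with
  | zero => rw [kernelOp_zero hg, add_zero]
  | succ a ih =>
    have hstep := integral_mul_transition hchain hstat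
      (hZ.mono (pastSigma_mono (Nat.le_add_right m a)) le_rfl) hZ1 (Φ := fun p => g p.2)
      (by fun_prop) (integrable_of_measurable_of_abs_le (by fun_prop) fun p => hc p.2)
    have hcomp : kernelOp κ (a + 1) g = kernelOp κ a fun x => ∫ y, g y ∂κ x :=
      funext fun x => Kernel.integral_comp (integrable_of_measurable_of_abs_le hg hc)
    rw [← add_assoc, hstep, hcomp,
      ← ih (measurable_integral_kernel hg) fun x => abs_integral_le_of_abs_le hc]

end ChainLaw

section ExpRemainder

/-- The remainder of `exp (i x)` after its second order Taylor polynomial. -/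
noncomputable def expRem (x : ℝ) : ℂ :=
  Complex.exp (x * Complex.I) - (1 + x * Complex.I - (x ^ 2 / 2 : ℝ))

theorem continuous_expRem : Continuous expRem := by
  unfold expRem
  fun_prop

theorem norm_expRem_le_cube {x : ℝ} (hx : |x| ≤ 1) : ‖expRem x‖ ≤ |x| ^ 3 := by
  have hnorm : ‖(x : ℂ) * Complex.I‖ = |x| := by simp
  have htaylor : ∑ m ∈ Finset.range 3, ((x : ℂ) * Complex.I) ^ m / m.factorial =
      1 + x * Complex.I - (x ^ 2 / 2 : ℝ) := by
    simp [Finset.sum_range_succ, mul_pow, Nat.factorial]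
    ring
  have hbound := Complex.exp_bound (by rwa [hnorm]) (n := 3) (by norm_num)
  rw [hnorm, htaylor] at hbound
  refine hbound.trans (mul_le_of_le_one_right (by positivity) ?_)
  norm_num [Nat.factorial]

theorem norm_expRem_le_sq (x : ℝ) : ‖expRem x‖ ≤ 4 * x ^ 2 := by
  rcases le_or_gt |x| 1 with hx | hx
  · have hcube : |x| ^ 3 ≤ |x| ^ 2 := pow_le_pow_of_le_one (abs_nonneg _) hx (by norm_num)
    rw [sq_abs] at hcube
    nlinarith [norm_expRem_le_cube hx, sq_nonneg x]
  · have htriangle : ‖expRem x‖ ≤ 1 + (1 + |x| + x ^ 2 / 2) := by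
      refine (norm_sub_le _ _).trans (add_le_add (Complex.norm_exp_ofReal_mul_I x).le ?_)
      refine (norm_sub_le _ _).trans (add_le_add ((norm_add_le _ _).trans ?_) ?_)
      · simp
      · rw [Complex.norm_real, Real.norm_of_nonneg (by positivity)]
    nlinarith [sq_abs x]

theorem nat_mul_norm_expRem_le (t x : ℝ) (n : ℕ) :
    n * ‖expRem (t / √n * x)‖ ≤ 4 * t ^ 2 * x ^ 2 := by
  rcases n.eq_zero_or_pos with rfl | hn
  · simp only [CharP.cast_eq_zero, zero_mul]
    positivity
  · have hn' : (0 : ℝ) < n := Nat.cast_pos.2 hn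
    calc (n : ℝ) * ‖expRem (t / √n * x)‖ ≤ n * (4 * (t / √n * x) ^ 2) := by
          gcongr
          exact norm_expRem_le_sq _
      _ = 4 * t ^ 2 * x ^ 2 := by
          rw [mul_pow, div_pow, Real.sq_sqrt hn'.le]
          field_simp

theorem tendsto_sqrt_natCast_atTop : Tendsto (fun n : ℕ => √(n : ℝ)) atTop atTop :=
  Real.tendsto_sqrt_atTop.comp tendsto_natCast_atTop_atTop

theorem tendsto_nat_mul_norm_expRem (t x : ℝ) :
    Tendsto (fun n : ℕ => n * ‖expRem (t / √n * x)‖) atTop (nhds 0) := by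
  refine squeeze_zero' (Eventually.of_forall fun n => by positivity) ?_
    (tendsto_sqrt_natCast_atTop.const_div_atTop (|t * x| ^ 3))
  filter_upwards [tendsto_sqrt_natCast_atTop.eventually_ge_atTop |t * x|,
    eventually_gt_atTop 0] with n hn hn0
  have hn' : (0 : ℝ) < n := Nat.cast_pos.2 hn0
  have hsqrt : 0 < √(n : ℝ) := Real.sqrt_pos.2 hn'
  have habs : |t / √n * x| = |t * x| / √n := by
    rw [div_mul_eq_mul_div, abs_div, abs_of_pos hsqrt]
  calc (n : ℝ) * ‖expRem (t / √n * x)‖ ≤ n * |t / √n * x| ^ 3 := by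
        gcongr
        exact norm_expRem_le_cube (by rwa [habs, div_le_one hsqrt])
    _ = |t * x| ^ 3 / √n := by
        rw [habs, div_pow, pow_succ (√(n : ℝ)) 2, Real.sq_sqrt hn'.le]
        field_simp

theorem tendsto_nat_mul_integral_norm_expRem {α : Type*} [MeasurableSpace α] {ν : Measure α}
    {d : α → ℝ} (hdm : Measurable d) (hd : Integrable (fun p => d p ^ 2) ν) (t : ℝ) :
    Tendsto (fun n : ℕ => n * ∫ p, ‖expRem (t / √n * d p)‖ ∂ν) atTop (nhds 0) := by
  simp_rw [← integral_const_mul]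
  rw [← integral_zero α ℝ (μ := ν)]
  refine tendsto_integral_of_dominated_convergence (fun p => 4 * t ^ 2 * d p ^ 2) (fun n => ?_)
    (hd.const_mul _) (fun n => ae_of_all _ fun p => ?_)
    (ae_of_all _ fun p => tendsto_nat_mul_norm_expRem t (d p))
  · have hcomp := continuous_expRem.measurable.comp (hdm.const_mul (t / √n))
    exact (hcomp.norm.const_mul _).aestronglyMeasurable
  · rw [Real.norm_of_nonneg (by positivity)]
    exact nat_mul_norm_expRem_le t (d p) n

theorem norm_exp_mul_I_sub_le (x y : ℝ) :
    ‖Complex.exp (x * Complex.I) - Complex.exp (y * Complex.I)‖ ≤ |x - y| := by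
  have hfactor : Complex.exp (x * Complex.I) - Complex.exp (y * Complex.I) =
      Complex.exp (y * Complex.I) * (Complex.exp (Complex.I * ((x - y : ℝ) : ℂ)) - 1) := by
    rw [mul_sub, ← Complex.exp_add]
    push_cast
    ring_nf
  rw [hfactor, norm_mul, Complex.norm_exp_ofReal_mul_I, one_mul]
  exact Real.norm_exp_I_mul_ofReal_sub_one_le

theorem norm_sub_pow_mul_le {a : ℕ → ℂ} {c : ℂ} {e : ℝ} (hc : ‖c‖ ≤ 1)
    (h : ∀ j, ‖a (j + 1) - c * a j‖ ≤ e) (n : ℕ) : ‖a n - c ^ n * a 0‖ ≤ n * e := by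
  induction n with
  | zero => simp
  | succ n ih =>
    calc ‖a (n + 1) - c ^ (n + 1) * a 0‖
        = ‖(a (n + 1) - c * a n) + c * (a n - c ^ n * a 0)‖ := by ring_nf
      _ ≤ ‖a (n + 1) - c * a n‖ + ‖c‖ * ‖a n - c ^ n * a 0‖ :=
        (norm_add_le _ _).trans_eq (by rw [norm_mul])
      _ ≤ e + 1 * (n * e) := by gcongr; exact h n
      _ = (n + 1 : ℕ) * e := by push_cast; ring

end ExpRemainder

section BoundedApproximation

variable {E : Type*} [MeasurableSpace E] {ρ : Measure E} {s : E → ℝ}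

theorem exists_bounded_integral_abs_sub_lt (hsm : Measurable s) (hs : Integrable s ρ)
    {η : ℝ} (hη : 0 < η) :
    ∃ b : E → ℝ, ∃ c : ℝ, Measurable b ∧ Integrable b ρ ∧ (∀ x, |b x| ≤ c) ∧
      ∫ x, |s x - b x| ∂ρ < η := by
  let b : ℕ → E → ℝ := fun N => {x | |s x| ≤ N}.indicator s
  have hS (N : ℕ) : MeasurableSet {x | |s x| ≤ (N : ℝ)} :=
    measurableSet_le hsm.abs measurable_const
  have hb (N : ℕ) : Measurable (b N) := hsm.indicator (hS N)
  have hlim : Tendsto (fun N => ∫ x, |s x - b N x| ∂ρ) atTop (nhds 0) := by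
    rw [← integral_zero E ℝ (μ := ρ)]
    refine tendsto_integral_of_dominated_convergence (fun x => |s x|)
      (fun N => (hsm.sub (hb N)).abs.aestronglyMeasurable) hs.abs
      (fun N => ae_of_all _ fun x => ?_) (ae_of_all _ fun x => ?_)
    · by_cases hx : |s x| ≤ N <;> simp [b, hx]
    · refine tendsto_const_nhds.congr' ?_
      filter_upwards [tendsto_natCast_atTop_atTop.eventually_ge_atTop |s x|] with N hN
      simp [b, hN]
  obtain ⟨N, hN⟩ := (hlim.eventually (gt_mem_nhds hη)).exists
  refine ⟨b N, N, hb N, hs.indicator (hS N), fun x => ?_, hN⟩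
  by_cases hx : |s x| ≤ N <;> simp [b, hx]

theorem exists_bounded_integral_eq_zero_integral_abs_sub_le [IsProbabilityMeasure ρ]
    (hsm : Measurable s) (hs : Integrable s ρ) (hs0 : ∫ x, s x ∂ρ = 0) {η : ℝ} (hη : 0 < η) :
    ∃ g : E → ℝ, ∃ c : ℝ, Measurable g ∧ (∀ x, |g x| ≤ c) ∧ ∫ x, g x ∂ρ = 0 ∧
      ∫ x, |s x - g x| ∂ρ ≤ η := by
  obtain ⟨b, c, hbm, hb, hc, hsb⟩ := exists_bounded_integral_abs_sub_lt hsm hs (half_pos hη)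
  set m := ∫ x, b x ∂ρ
  have hm : |m| ≤ ∫ x, |s x - b x| ∂ρ := by
    calc |m| = |∫ x, (s x - b x) ∂ρ| := by rw [integral_sub hs hb, hs0, zero_sub, abs_neg]
      _ ≤ ∫ x, |s x - b x| ∂ρ := abs_integral_le_integral_abs
  have hsbi : Integrable (fun x => |s x - b x|) ρ := (hs.sub hb).abs
  refine ⟨fun x => b x - m, c + |m|, hbm.sub_const _,
    fun x => (abs_sub _ _).trans (add_le_add_left (hc x) _), ?_, ?_⟩
  · simp [integral_sub hb (integrable_const m), m]
  · calc ∫ x, |s x - (b x - m)| ∂ρ ≤ ∫ x, (|s x - b x| + |m|) ∂ρ := by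
          refine integral_mono (hs.sub (hb.sub (integrable_const _))).abs
            (hsbi.add (integrable_const _)) fun x => ?_
          simp only [← sub_add]
          exact abs_add_le _ _
      _ = (∫ x, |s x - b x| ∂ρ) + |m| := by
          rw [integral_add hsbi (integrable_const _)]
          simp
      _ ≤ η := by linarith

end BoundedApproximation

section ChainExpectation

variable {Ω E : Type*} [MeasurableSpace E] [MeasurableSpace Ω] {P : Measure Ω} {X : ℕ → Ω → E}
  {κ : Kernel E E} {ρ : Measure E}

theorem integral_comp_chain (hchain : IsMarkovChain P X κ) (hstat : ∀ n, P.map (X n) = ρ)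
    {g : E → ℝ} (hg : Measurable g) (n : ℕ) : ∫ ω, g (X n ω) ∂P = ∫ x, g x ∂ρ := by
  rw [← hstat n, integral_map (hchain.1 n).aemeasurable hg.aestronglyMeasurable]

theorem integrable_comp_chain (hchain : IsMarkovChain P X κ) (hstat : ∀ n, P.map (X n) = ρ)
    {g : E → ℝ} (hg : Integrable g ρ) (n : ℕ) : Integrable (fun ω => g (X n ω)) P := by
  rw [← hstat n] at hg
  exact hg.comp_measurable (hchain.1 n)

variable [IsProbabilityMeasure P] [IsMarkovKernel κ] {d : E × E → ℝ}

theorem integral_comp_chain_pair (hchain : IsMarkovChain P X κ) (hstat : ∀ n, P.map (X n) = ρ)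
    (hd : Measurable d) (n : ℕ) :
    ∫ ω, d (X n ω, X (n + 1) ω) ∂P = ∫ p, d p ∂(ρ ⊗ₘ κ) := by
  rw [← map_prodMk_next hchain hstat n, integral_map
    ((hchain.1 n).prodMk (hchain.1 (n + 1))).aemeasurable hd.aestronglyMeasurable]

theorem integrable_comp_chain_pair (hchain : IsMarkovChain P X κ) (hstat : ∀ n, P.map (X n) = ρ)
    {F : Type*} [NormedAddCommGroup F] {u : E × E → F} (hu : Integrable u (ρ ⊗ₘ κ)) (n : ℕ) :
    Integrable (fun ω => u (X n ω, X (n + 1) ω)) P := by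
  rw [← map_prodMk_next hchain hstat n] at hu
  exact hu.comp_measurable ((hchain.1 n).prodMk (hchain.1 (n + 1)))

end ChainExpectation

section ExpSum

variable {Ω E : Type*}

/-- The exponential `exp (i θ ∑_{k < n} d (X k, X (k + 1)))`, whose mean is the characteristic
function at `θ` of the additive functional of consecutive states driven by `d`. -/
noncomputable def expSum (X : ℕ → Ω → E) (d : E × E → ℝ) (θ : ℝ) (n : ℕ) (ω : Ω) : ℂ :=
  Complex.exp ((θ * ∑ k ∈ Finset.range n, d (X k ω, X (k + 1) ω) : ℝ) * Complex.I)

theorem norm_expSum (X : ℕ → Ω → E) (d : E × E → ℝ) (θ : ℝ) (n : ℕ) (ω : Ω) :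
    ‖expSum X d θ n ω‖ = 1 :=
  Complex.norm_exp_ofReal_mul_I _

theorem expSum_zero (X : ℕ → Ω → E) (d : E × E → ℝ) (θ : ℝ) (ω : Ω) : expSum X d θ 0 ω = 1 := by
  simp [expSum]

theorem expSum_succ (X : ℕ → Ω → E) (d : E × E → ℝ) (θ : ℝ) (n : ℕ) (ω : Ω) :
    expSum X d θ (n + 1) ω =
      expSum X d θ n ω * Complex.exp ((θ * d (X n ω, X (n + 1) ω) : ℝ) * Complex.I) := by
  rw [expSum, expSum, ← Complex.exp_add, Finset.sum_range_succ]
  push_cast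
  ring_nf

theorem norm_expSum_add_sub_le (X : ℕ → Ω → E) (d : E × E → ℝ) (θ : ℝ) (m a : ℕ) (ω : Ω) :
    ‖expSum X d θ (m + a) ω - expSum X d θ m ω‖ ≤
      |θ| * ∑ k ∈ Finset.range a, |d (X (m + k) ω, X (m + k + 1) ω)| := by
  refine (norm_exp_mul_I_sub_le _ _).trans ?_
  rw [← mul_sub, abs_mul, Finset.sum_range_add, add_sub_cancel_left]
  gcongr
  exact Finset.abs_sum_le_sum_abs _ _

theorem norm_integral_expSum_mul_ofReal_le [MeasurableSpace Ω] {P : Measure Ω}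
    (X : ℕ → Ω → E) (d : E × E → ℝ) (θ : ℝ) (n : ℕ) (u : Ω → ℝ) :
    ‖∫ ω, expSum X d θ n ω * (u ω : ℂ) ∂P‖ ≤ ∫ ω, |u ω| ∂P := by
  refine (norm_integral_le_integral_norm _).trans_eq (integral_congr_ae (ae_of_all _ fun ω => ?_))
  simp only [norm_mul, norm_expSum, one_mul, Complex.norm_real, Real.norm_eq_abs]

variable [MeasurableSpace E] {X : ℕ → Ω → E} {d : E × E → ℝ}

theorem measurable_expSum (X : ℕ → Ω → E) (hd : Measurable d) (θ : ℝ) (n : ℕ) :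
    Measurable[pastSigma X n] (expSum X d θ n) := by
  have hsum : Measurable[pastSigma X n]
      fun ω => θ * ∑ k ∈ Finset.range n, d (X k ω, X (k + 1) ω) := by
    refine Measurable.const_mul (Finset.measurable_sum _ fun k hk => ?_) _
    have hk := Finset.mem_range.1 hk
    exact hd.comp ((measurable_of_le_pastSigma hk.le).prodMk (measurable_of_le_pastSigma hk))
  have hexp : Measurable fun x : ℝ => Complex.exp (x * Complex.I) := by fun_prop
  exact hexp.comp hsum

variable [MeasurableSpace Ω] {P : Measure Ω} {κ : Kernel E E} {ρ : Measure E}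
  [IsProbabilityMeasure P]

theorem integrable_expSum (hX : ∀ n, Measurable (X n)) (hd : Measurable d) (θ : ℝ) (n : ℕ) :
    Integrable (expSum X d θ n) P :=
  Integrable.of_bound
    ((measurable_expSum X hd θ n).mono (pastSigma_le hX n) le_rfl).aestronglyMeasurable 1
    (ae_of_all _ fun ω => (norm_expSum X d θ n ω).le)

theorem integrable_expSum_mul_ofReal (hX : ∀ n, Measurable (X n)) (hd : Measurable d) (θ : ℝ)
    (n : ℕ) {u : Ω → ℝ} (hu : Integrable u P) :
    Integrable (fun ω => expSum X d θ n ω * (u ω : ℂ)) P :=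
  hu.ofReal.bdd_mul (c := 1) (integrable_expSum hX hd θ n).1
    (ae_of_all _ fun ω => (norm_expSum X d θ n ω).le)

variable [IsMarkovKernel κ]

theorem integral_norm_expSum_add_sub_le (hchain : IsMarkovChain P X κ)
    (hstat : ∀ n, P.map (X n) = ρ) (hdm : Measurable d) (hd : Integrable d (ρ ⊗ₘ κ)) (θ : ℝ)
    (m a : ℕ) :
    ∫ ω, ‖expSum X d θ (m + a) ω - expSum X d θ m ω‖ ∂P ≤ a * (∫ p, |d p| ∂(ρ ⊗ₘ κ)) * |θ| := by
  have hk (k : ℕ) : Integrable (fun ω => |d (X k ω, X (k + 1) ω)|) P :=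
    (integrable_comp_chain_pair hchain hstat hd k).abs
  have hexp (n : ℕ) := integrable_expSum (P := P) hchain.1 hdm θ n
  calc ∫ ω, ‖expSum X d θ (m + a) ω - expSum X d θ m ω‖ ∂P
      ≤ ∫ ω, |θ| * ∑ k ∈ Finset.range a, |d (X (m + k) ω, X (m + k + 1) ω)| ∂P :=
        integral_mono ((hexp _).sub (hexp _)).norm
          ((integrable_finsetSum _ fun k _ => hk (m + k)).const_mul _)
          (norm_expSum_add_sub_le X d θ m a)
    _ = |θ| * ∑ _k ∈ Finset.range a, ∫ p, |d p| ∂(ρ ⊗ₘ κ) := by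
        rw [integral_const_mul, integral_finsetSum _ fun k _ => hk (m + k)]
        simp_rw [integral_comp_chain_pair hchain hstat hdm.abs]
    _ = a * (∫ p, |d p| ∂(ρ ⊗ₘ κ)) * |θ| := by
        rw [Finset.sum_const, Finset.card_range, nsmul_eq_mul, mul_comm]

end ExpSum

section Decoupling

/-- `P ^ n g → ∫ g dρ` in `L¹(ρ)` for all bounded measurable `g`: the only mixing property that
the martingale central limit theorem along the chain needs. -/
def IsL1Mixing {E : Type*} [MeasurableSpace E] (κ : Kernel E E) (ρ : Measure E) : Prop :=
  ∀ (g : E → ℝ) (c : ℝ), Measurable g → (∀ x, |g x| ≤ c) →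
    Tendsto (fun n => ∫ x, |kernelOp κ n g x - ∫ y, g y ∂ρ| ∂ρ) atTop (nhds 0)

theorem GeometricallyErgodic.isL1Mixing {E : Type*} [MeasurableSpace E] {κ : Kernel E E}
    {ρ : Measure E} [IsMarkovKernel κ] [IsProbabilityMeasure ρ] (hκ : Kernel.Invariant κ ρ)
    (hgeo : GeometricallyErgodic κ ρ) : IsL1Mixing κ ρ := by
  obtain ⟨K, l, -, hl0, hl1, hbound⟩ := hgeo.exists_integral_abs_kernelOp_sub_le hκ
  intro g c hg hc
  refine squeeze_zero (fun n => integral_nonneg fun x => abs_nonneg _) (hbound g c hg hc) ?_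
  simpa using ((tendsto_pow_atTop_nhds_zero_of_lt_one hl0.le hl1).const_mul K).const_mul c

variable {Ω E : Type*} [MeasurableSpace E] [MeasurableSpace Ω] {P : Measure Ω} {X : ℕ → Ω → E}
  {κ : Kernel E E} {ρ : Measure E} [IsProbabilityMeasure P] [IsMarkovKernel κ] {d : E × E → ℝ}
  {g : E → ℝ} {c : ℝ}

-- Going back `a` steps in the exponential costs `O(θ)` and lets the chain mix in between.
theorem norm_integral_expSum_add_mul_le (hchain : IsMarkovChain P X κ)
    (hstat : ∀ n, P.map (X n) = ρ) (hdm : Measurable d) (hd : Integrable d (ρ ⊗ₘ κ))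
    (hg : Measurable g) (hc : ∀ x, |g x| ≤ c) (θ : ℝ) (m a : ℕ) :
    ‖∫ ω, expSum X d θ (m + a) ω * (g (X (m + a) ω) : ℝ) ∂P‖ ≤
      ‖∫ ω, expSum X d θ m ω * (g (X (m + a) ω) : ℝ) ∂P‖ +
        c * (a * (∫ p, |d p| ∂(ρ ⊗ₘ κ)) * |θ|) := by
  have := isProbabilityMeasure_of_map_eq hchain hstat
  have hgX := integrable_comp_chain hchain hstat
    (integrable_of_measurable_of_abs_le (ν := ρ) hg hc) (m + a)
  have hexp (n : ℕ) := integrable_expSum (P := P) hchain.1 hdm θ n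
  have hmul (n : ℕ) := integrable_expSum_mul_ofReal hchain.1 hdm θ n hgX
  have hc0 : 0 ≤ c := (abs_nonneg _).trans (hc ρ.nonempty_of_neZero.some)
  rw [← sub_le_iff_le_add']
  calc _ ≤ ‖∫ ω, (expSum X d θ (m + a) ω - expSum X d θ m ω) * (g (X (m + a) ω) : ℝ) ∂P‖ := by
        simp_rw [sub_mul]
        rw [integral_sub (hmul _) (hmul _)]
        exact norm_sub_norm_le _ _
    _ ≤ ∫ ω, c * ‖expSum X d θ (m + a) ω - expSum X d θ m ω‖ ∂P := by
        refine norm_integral_le_of_norm_le (((hexp _).sub (hexp _)).norm.const_mul c)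
          (ae_of_all _ fun ω => ?_)
        rw [norm_mul, Complex.norm_real, Real.norm_eq_abs, mul_comm]
        exact mul_le_mul_of_nonneg_right (hc _) (norm_nonneg _)
    _ ≤ _ := by
        rw [integral_const_mul]
        exact mul_le_mul_of_nonneg_left
          (integral_norm_expSum_add_sub_le hchain hstat hdm hd θ m a) hc0

theorem norm_integral_expSum_mul_comp_add_le (hchain : IsMarkovChain P X κ)
    (hstat : ∀ n, P.map (X n) = ρ) (hd : Measurable d) (hg : Measurable g)
    (hc : ∀ x, |g x| ≤ c) (θ : ℝ) (m a : ℕ) :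
    ‖∫ ω, expSum X d θ m ω * (g (X (m + a) ω) : ℝ) ∂P‖ ≤ ∫ x, |kernelOp κ a g x| ∂ρ := by
  have := isProbabilityMeasure_of_map_eq hchain hstat
  have hT := measurable_kernelOp (κ := κ) a hg
  calc ‖∫ ω, expSum X d θ m ω * (g (X (m + a) ω) : ℝ) ∂P‖
      = ‖∫ ω, expSum X d θ m ω * (kernelOp κ a g (X m ω) : ℝ) ∂P‖ := by
        rw [integral_mul_kernelOp hchain hstat (measurable_expSum X hd θ m)
          (fun ω => (norm_expSum X d θ m ω).le) a hg hc]
    _ ≤ ∫ ω, |kernelOp κ a g (X m ω)| ∂P :=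
        norm_integral_expSum_mul_ofReal_le X d θ m _
    _ = ∫ x, |kernelOp κ a g x| ∂ρ :=
        integral_comp_chain hchain hstat (g := fun x => |kernelOp κ a g x|) hT.abs m

theorem exists_norm_integral_expSum_mul_le_of_bounded (hchain : IsMarkovChain P X κ)
    (hstat : ∀ n, P.map (X n) = ρ) (hmix : IsL1Mixing κ ρ) (hdm : Measurable d)
    (hd : Integrable d (ρ ⊗ₘ κ)) (hg : Measurable g) (hc : ∀ x, |g x| ≤ c)
    (hg0 : ∫ x, g x ∂ρ = 0) {η : ℝ} (hη : 0 < η) :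
    ∃ K : ℝ, ∀ (θ : ℝ) (j : ℕ),
      ‖∫ ω, expSum X d θ j ω * (g (X j ω) : ℝ) ∂P‖ ≤ η + K * |θ| := by
  have hlim := hmix g c hg hc
  simp only [hg0, sub_zero] at hlim
  obtain ⟨L, hL⟩ := (hlim.eventually (gt_mem_nhds hη)).exists
  set D := ∫ p, |d p| ∂(ρ ⊗ₘ κ)
  have : 0 ≤ D := integral_nonneg fun p => abs_nonneg _
  have := isProbabilityMeasure_of_map_eq hchain hstat
  have hc0 : 0 ≤ c := (abs_nonneg _).trans (hc ρ.nonempty_of_neZero.some)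
  refine ⟨c * (L * D), fun θ j => ?_⟩
  rcases le_total L j with hLj | hjL
  · obtain ⟨m, rfl⟩ := Nat.exists_eq_add_of_le' hLj
    linarith [norm_integral_expSum_add_mul_le hchain hstat hdm hd hg hc θ m L,
      norm_integral_expSum_mul_comp_add_le hchain hstat hdm hg hc θ m L]
  · have hzero : ∫ ω, expSum X d θ 0 ω * (g (X (0 + j) ω) : ℝ) ∂P = 0 := by
      simp only [expSum_zero, one_mul]
      rw [integral_complex_ofReal, integral_comp_chain hchain hstat hg, hg0, Complex.ofReal_zero]
    have hback := norm_integral_expSum_add_mul_le hchain hstat hdm hd hg hc θ 0 j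
    rw [hzero, norm_zero, zero_add, zero_add] at hback
    calc _ ≤ c * (j * D * |θ|) := hback
      _ ≤ c * (L * D * |θ|) := by gcongr
      _ ≤ η + c * (L * D) * |θ| := by linarith

theorem exists_norm_integral_expSum_mul_le (hchain : IsMarkovChain P X κ)
    (hstat : ∀ n, P.map (X n) = ρ) (hmix : IsL1Mixing κ ρ) (hdm : Measurable d)
    (hd : Integrable d (ρ ⊗ₘ κ)) {s : E → ℝ} (hsm : Measurable s) (hs : Integrable s ρ)
    (hs0 : ∫ x, s x ∂ρ = 0) {η : ℝ} (hη : 0 < η) :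
    ∃ K : ℝ, ∀ (θ : ℝ) (j : ℕ),
      ‖∫ ω, expSum X d θ j ω * (s (X j ω) : ℝ) ∂P‖ ≤ η + K * |θ| := by
  have := isProbabilityMeasure_of_map_eq hchain hstat
  obtain ⟨g, c, hg, hc, hg0, hsg⟩ :=
    exists_bounded_integral_eq_zero_integral_abs_sub_le hsm hs hs0 (half_pos hη)
  obtain ⟨K, hK⟩ := exists_norm_integral_expSum_mul_le_of_bounded hchain hstat hmix hdm hd hg hc
    hg0 (half_pos hη)
  refine ⟨K, fun θ j => ?_⟩
  have hgi := integrable_of_measurable_of_abs_le (ν := ρ) hg hc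
  have hsgi : Integrable (fun x => s x - g x) ρ := hs.sub hgi
  have hmul {u : E → ℝ} (hu : Integrable u ρ) := integrable_expSum_mul_ofReal hchain.1 hdm θ j
    (integrable_comp_chain hchain hstat hu j)
  have hsplit : ∫ ω, expSum X d θ j ω * (s (X j ω) : ℝ) ∂P =
      ∫ ω, expSum X d θ j ω * ((s (X j ω) - g (X j ω) : ℝ) : ℂ) ∂P +
        ∫ ω, expSum X d θ j ω * (g (X j ω) : ℝ) ∂P := by
    rw [← integral_add (hmul hsgi) (hmul hgi)]
    congr with ω
    push_cast
    ring
  have herror : ‖∫ ω, expSum X d θ j ω * ((s (X j ω) - g (X j ω) : ℝ) : ℂ) ∂P‖ ≤ η / 2 := by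
    refine (norm_integral_expSum_mul_ofReal_le X d θ j _).trans ?_
    rwa [integral_comp_chain hchain hstat (g := fun x => |s x - g x|) (hsm.sub hg).abs j]
  rw [hsplit]
  exact (norm_add_le _ _).trans (by linarith [hK θ j])

end Decoupling

section MartingaleCLT

variable {Ω E : Type*} [MeasurableSpace E] [MeasurableSpace Ω] {P : Measure Ω} {X : ℕ → Ω → E}
  {κ : Kernel E E} {ρ : Measure E} [IsProbabilityMeasure P] [IsMarkovKernel κ] {d : E × E → ℝ}

theorem integral_expSum_mul_eq_zero (hchain : IsMarkovChain P X κ) (hstat : ∀ n, P.map (X n) = ρ)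
    (hdm : Measurable d) (hd : Integrable d (ρ ⊗ₘ κ)) (hd0 : ∀ᵐ x ∂ρ, ∫ y, d (x, y) ∂κ x = 0)
    (θ : ℝ) (j : ℕ) : ∫ ω, expSum X d θ j ω * (d (X j ω, X (j + 1) ω) : ℝ) ∂P = 0 := by
  rw [integral_mul_transition hchain hstat (measurable_expSum X hdm θ j)
    (fun ω => (norm_expSum X d θ j ω).le) hdm hd]
  rw [← hstat j] at hd0
  refine integral_eq_zero_of_ae ?_
  filter_upwards [ae_of_ae_map (hchain.1 j).aemeasurable hd0] with ω hω
  simp [hω]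

theorem integrable_expRem_comp {α : Type*} [MeasurableSpace α] {ν : Measure α} {u : α → ℝ}
    (hum : Measurable u) (hu : Integrable (fun p => u p ^ 2) ν) (θ : ℝ) :
    Integrable (fun p => expRem (θ * u p)) ν :=
  (hu.const_mul (4 * θ ^ 2)).mono'
    (continuous_expRem.measurable.comp (hum.const_mul θ)).aestronglyMeasurable
    (ae_of_all _ fun _ => (norm_expRem_le_sq _).trans_eq (by ring))

theorem norm_integral_expSum_mul_expRem_le (hchain : IsMarkovChain P X κ)
    (hstat : ∀ n, P.map (X n) = ρ) (hdm : Measurable d) (θ : ℝ) (j : ℕ) :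
    ‖∫ ω, expSum X d θ j ω * expRem (θ * d (X j ω, X (j + 1) ω)) ∂P‖ ≤
      ∫ p, ‖expRem (θ * d p)‖ ∂(ρ ⊗ₘ κ) := by
  have hrem : Measurable fun p => ‖expRem (θ * d p)‖ :=
    (continuous_expRem.measurable.comp (hdm.const_mul θ)).norm
  rw [← integral_comp_chain_pair hchain hstat hrem j]
  refine (norm_integral_le_integral_norm _).trans_eq (integral_congr_ae (ae_of_all _ fun ω => ?_))
  simp only [norm_mul, norm_expSum, one_mul]

theorem integral_expSum_succ (hchain : IsMarkovChain P X κ) (hstat : ∀ n, P.map (X n) = ρ)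
    (hdm : Measurable d) (hd : Integrable d (ρ ⊗ₘ κ))
    (hd2 : Integrable (fun p => d p ^ 2) (ρ ⊗ₘ κ)) (hd0 : ∀ᵐ x ∂ρ, ∫ y, d (x, y) ∂κ x = 0)
    (θ : ℝ) (j : ℕ) :
    ∫ ω, expSum X d θ (j + 1) ω ∂P = ∫ ω, expSum X d θ j ω ∂P -
      (θ ^ 2 / 2 : ℝ) * ∫ ω, expSum X d θ j ω * (d (X j ω, X (j + 1) ω) ^ 2 : ℝ) ∂P +
      ∫ ω, expSum X d θ j ω * expRem (θ * d (X j ω, X (j + 1) ω)) ∂P := by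
  have hZ := integrable_expSum (P := P) hchain.1 hdm θ j
  have hlin := (integrable_expSum_mul_ofReal hchain.1 hdm θ j
    (integrable_comp_chain_pair hchain hstat hd j)).const_mul (θ * Complex.I)
  have hquad := (integrable_expSum_mul_ofReal hchain.1 hdm θ j
    (integrable_comp_chain_pair hchain hstat hd2 j)).const_mul ((-(θ ^ 2 / 2) : ℝ) : ℂ)
  have hrem : Integrable (fun ω => expSum X d θ j ω * expRem (θ * d (X j ω, X (j + 1) ω))) P :=
    (integrable_comp_chain_pair hchain hstat (integrable_expRem_comp hdm hd2 θ) j).bdd_mul (c := 1)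
      hZ.1 (ae_of_all _ fun ω => (norm_expSum X d θ j ω).le)
  have htaylor (ω : Ω) : expSum X d θ (j + 1) ω = expSum X d θ j ω +
      (θ * Complex.I) * (expSum X d θ j ω * (d (X j ω, X (j + 1) ω) : ℝ)) +
      (-(θ ^ 2 / 2) : ℝ) * (expSum X d θ j ω * (d (X j ω, X (j + 1) ω) ^ 2 : ℝ)) +
      expSum X d θ j ω * expRem (θ * d (X j ω, X (j + 1) ω)) := by
    rw [expSum_succ, expRem]
    push_cast
    ring
  simp_rw [htaylor]
  rw [integral_add ((hZ.fun_add hlin).fun_add hquad) hrem, integral_add (hZ.fun_add hlin) hquad,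
    integral_add hZ hlin, integral_const_mul, integral_const_mul,
    integral_expSum_mul_eq_zero hchain hstat hdm hd hd0]
  push_cast
  ring

theorem integrable_integral_of_integrable_compProd {u : E × E → ℝ} [SFinite ρ]
    (hu : Integrable u (ρ ⊗ₘ κ)) : Integrable (fun x => ∫ y, u (x, y) ∂κ x) ρ := by
  simpa using Integrable.integral_compProd (κ := Kernel.const Unit ρ)
    (η := Kernel.prodMkLeft Unit κ) (a := ()) hu

theorem measurable_integral_sq_kernel (hd : Measurable d) :
    Measurable fun x => ∫ y, d (x, y) ^ 2 ∂κ x :=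
  ((hd.pow_const 2).stronglyMeasurable.integral_kernel_prod_right' (κ := κ)).measurable

theorem integral_expSum_mul_sq (hchain : IsMarkovChain P X κ) (hstat : ∀ n, P.map (X n) = ρ)
    (hdm : Measurable d) (hd2 : Integrable (fun p => d p ^ 2) (ρ ⊗ₘ κ)) (v θ : ℝ) (j : ℕ) :
    ∫ ω, expSum X d θ j ω * (d (X j ω, X (j + 1) ω) ^ 2 : ℝ) ∂P =
      ∫ ω, expSum X d θ j ω * ((∫ y, d (X j ω, y) ^ 2 ∂κ (X j ω)) - v : ℝ) ∂P +
        v * ∫ ω, expSum X d θ j ω ∂P := by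
  have := isProbabilityMeasure_of_map_eq hchain hstat
  have hcond : Integrable (fun x => (∫ y, d (x, y) ^ 2 ∂κ x) - v) ρ :=
    (integrable_integral_of_integrable_compProd hd2).sub (integrable_const v)
  have hcondX := integrable_expSum_mul_ofReal hchain.1 hdm θ j
    (integrable_comp_chain hchain hstat hcond j)
  rw [integral_mul_transition hchain hstat (measurable_expSum X hdm θ j)
    (fun ω => (norm_expSum X d θ j ω).le) (Φ := fun p => d p ^ 2) (hdm.pow_const 2) hd2,
    ← integral_const_mul, ← integral_add hcondX ((integrable_expSum hchain.1 hdm θ j).const_mul _)]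
  congr with ω
  push_cast
  ring

theorem norm_integral_expSum_succ_sub_le (hchain : IsMarkovChain P X κ)
    (hstat : ∀ n, P.map (X n) = ρ) (hdm : Measurable d) (hd : Integrable d (ρ ⊗ₘ κ))
    (hd2 : Integrable (fun p => d p ^ 2) (ρ ⊗ₘ κ)) (hd0 : ∀ᵐ x ∂ρ, ∫ y, d (x, y) ∂κ x = 0)
    (v θ : ℝ) (j : ℕ) :
    ‖∫ ω, expSum X d θ (j + 1) ω ∂P -
        ((1 - θ ^ 2 * v / 2 : ℝ) : ℂ) * ∫ ω, expSum X d θ j ω ∂P‖ ≤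
      θ ^ 2 / 2 * ‖∫ ω, expSum X d θ j ω * ((∫ y, d (X j ω, y) ^ 2 ∂κ (X j ω)) - v : ℝ) ∂P‖ +
        ∫ p, ‖expRem (θ * d p)‖ ∂(ρ ⊗ₘ κ) := by
  rw [integral_expSum_succ hchain hstat hdm hd hd2 hd0,
    integral_expSum_mul_sq hchain hstat hdm hd2 v]
  have hrem := norm_integral_expSum_mul_expRem_le hchain hstat hdm θ j
  set V := ∫ ω, expSum X d θ j ω * ((∫ y, d (X j ω, y) ^ 2 ∂κ (X j ω)) - v : ℝ) ∂P
  set R := ∫ ω, expSum X d θ j ω * expRem (θ * d (X j ω, X (j + 1) ω)) ∂P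
  set φ := ∫ ω, expSum X d θ j ω ∂P
  calc ‖φ - (θ ^ 2 / 2 : ℝ) * (V + v * φ) + R - ((1 - θ ^ 2 * v / 2 : ℝ) : ℂ) * φ‖
      = ‖R - (θ ^ 2 / 2 : ℝ) * V‖ := by
        push_cast
        ring_nf
    _ ≤ ‖R‖ + ‖((θ ^ 2 / 2 : ℝ) : ℂ) * V‖ := norm_sub_le _ _
    _ = θ ^ 2 / 2 * ‖V‖ + ‖R‖ := by
        rw [norm_mul, Complex.norm_real, Real.norm_of_nonneg (by positivity), add_comm]
    _ ≤ _ := by gcongr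

theorem tendsto_one_sub_div_sqrt_sq_pow (t v : ℝ) :
    Tendsto (fun n : ℕ => ((1 - (t / √n) ^ 2 * v / 2 : ℝ) : ℂ) ^ n) atTop
      (nhds (Complex.exp (-(t ^ 2 * v) / 2 : ℝ))) := by
  refine (Complex.tendsto_one_add_div_pow_exp ((-(t ^ 2 * v) / 2 : ℝ) : ℂ)).congr fun n => ?_
  rw [div_pow, Real.sq_sqrt n.cast_nonneg]
  push_cast
  ring

theorem eventually_norm_one_sub_div_sqrt_sq_le_one (t : ℝ) {v : ℝ} (hv : 0 ≤ v) :
    ∀ᶠ n : ℕ in atTop, ‖((1 - (t / √n) ^ 2 * v / 2 : ℝ) : ℂ)‖ ≤ 1 := by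
  have hlim : Tendsto (fun n : ℕ => (t / √n) ^ 2 * v / 2) atTop (nhds (0 ^ 2 * v / 2)) :=
    (((tendsto_sqrt_natCast_atTop.const_div_atTop t).pow 2).mul_const v).div_const 2
  filter_upwards [hlim.eventually (gt_mem_nhds (by norm_num : (0 : ℝ) ^ 2 * v / 2 < 1))] with n hn
  rw [Complex.norm_real, Real.norm_eq_abs, abs_le]
  have hnonneg : 0 ≤ (t / √n) ^ 2 * v / 2 := by positivity
  constructor <;> linarith

theorem exists_norm_integral_expSum_sub_pow_le (hchain : IsMarkovChain P X κ)
    (hstat : ∀ n, P.map (X n) = ρ) (hmix : IsL1Mixing κ ρ) (hdm : Measurable d)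
    (hd : Integrable d (ρ ⊗ₘ κ)) (hd2 : Integrable (fun p => d p ^ 2) (ρ ⊗ₘ κ))
    (hd0 : ∀ᵐ x ∂ρ, ∫ y, d (x, y) ∂κ x = 0) {v : ℝ} (hv : v = ∫ p, d p ^ 2 ∂(ρ ⊗ₘ κ)) {η : ℝ}
    (hη : 0 < η) :
    ∃ K : ℝ, ∀ (θ : ℝ) (n : ℕ), ‖((1 - θ ^ 2 * v / 2 : ℝ) : ℂ)‖ ≤ 1 →
      ‖∫ ω, expSum X d θ n ω ∂P - ((1 - θ ^ 2 * v / 2 : ℝ) : ℂ) ^ n‖ ≤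
        n * (θ ^ 2 / 2 * (η + K * |θ|) + ∫ p, ‖expRem (θ * d p)‖ ∂(ρ ⊗ₘ κ)) := by
  have := isProbabilityMeasure_of_map_eq hchain hstat
  have hcond := integrable_integral_of_integrable_compProd hd2
  have hmean : ∫ x, ((∫ y, d (x, y) ^ 2 ∂κ x) - v) ∂ρ = 0 := by
    rw [integral_sub hcond (integrable_const v), hv, Measure.integral_compProd hd2]
    simp
  obtain ⟨K, hK⟩ := exists_norm_integral_expSum_mul_le hchain hstat hmix hdm hd
    ((measurable_integral_sq_kernel hdm).sub_const v) (hcond.sub (integrable_const v)) hmean hη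
  refine ⟨K, fun θ n hnorm => ?_⟩
  have hrec := norm_sub_pow_mul_le (a := fun j => ∫ ω, expSum X d θ j ω ∂P) hnorm
    (fun j => (norm_integral_expSum_succ_sub_le hchain hstat hdm hd hd2 hd0 v θ j).trans
      (add_le_add_left (mul_le_mul_of_nonneg_left (hK θ j) (by positivity)) _)) n
  simpa only [expSum_zero, integral_const, probReal_univ, one_smul, mul_one] using hrec

theorem tendsto_integral_expSum (hchain : IsMarkovChain P X κ) (hstat : ∀ n, P.map (X n) = ρ)
    (hmix : IsL1Mixing κ ρ) (hdm : Measurable d) (hd : Integrable d (ρ ⊗ₘ κ))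
    (hd2 : Integrable (fun p => d p ^ 2) (ρ ⊗ₘ κ)) (hd0 : ∀ᵐ x ∂ρ, ∫ y, d (x, y) ∂κ x = 0)
    (t : ℝ) :
    Tendsto (fun n : ℕ => ∫ ω, expSum X d (t / √n) n ω ∂P) atTop
      (nhds (Complex.exp (-(t ^ 2 * ∫ p, d p ^ 2 ∂(ρ ⊗ₘ κ)) / 2 : ℝ))) := by
  set v := ∫ p, d p ^ 2 ∂(ρ ⊗ₘ κ) with hv
  have hv0 : 0 ≤ v := integral_nonneg fun p => sq_nonneg _
  suffices hdiff : Tendsto (fun n : ℕ => ∫ ω, expSum X d (t / √n) n ω ∂P -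
      ((1 - (t / √n) ^ 2 * v / 2 : ℝ) : ℂ) ^ n) atTop (nhds 0) by
    simpa using hdiff.add (tendsto_one_sub_div_sqrt_sq_pow t v)
  rw [Metric.tendsto_nhds]
  intro δ hδ
  set η := δ / (t ^ 2 + 1)
  obtain ⟨K, hK⟩ := exists_norm_integral_expSum_sub_pow_le hchain hstat hmix hdm hd hd2 hd0 hv
    (by positivity : 0 < η)
  have herror : Tendsto (fun n : ℕ => t ^ 2 / 2 * (η + K * |t / √n|) +
      n * ∫ p, ‖expRem (t / √n * d p)‖ ∂(ρ ⊗ₘ κ)) atTop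
      (nhds (t ^ 2 / 2 * (η + K * |0|) + 0)) :=
    ((((tendsto_sqrt_natCast_atTop.const_div_atTop t).abs.const_mul K).const_add _).const_mul
      _).add (tendsto_nat_mul_integral_norm_expRem hdm hd2 t)
  have hsmall : t ^ 2 / 2 * (η + K * |0|) + 0 < δ := by
    have hη : η * (t ^ 2 + 1) = δ := div_mul_cancel₀ _ (by positivity)
    rw [abs_zero, mul_zero, add_zero, add_zero]
    nlinarith [(by positivity : 0 < η), (by positivity : 0 ≤ η * t ^ 2)]
  filter_upwards [herror.eventually (gt_mem_nhds hsmall),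
    eventually_norm_one_sub_div_sqrt_sq_le_one t hv0, eventually_gt_atTop 0] with n hn hnorm hn0
  rw [dist_zero_right]
  refine ((hK _ n hnorm).trans_eq ?_).trans_lt hn
  have hn' : (n : ℝ) ≠ 0 := Nat.cast_ne_zero.2 hn0.ne'
  rw [div_pow, Real.sq_sqrt n.cast_nonneg]
  field_simp

end MartingaleCLT

section ConvergenceInDistribution

theorem tendstoInMeasure_of_tendstoInDistribution_const {Ω Ω' F ι : Type*} [MeasurableSpace Ω]
    [MeasurableSpace Ω'] [PseudoEMetricSpace F] [MeasurableSpace F] [OpensMeasurableSpace F]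
    {P : Measure Ω} [IsProbabilityMeasure P] {Q : Measure Ω'} [IsProbabilityMeasure Q]
    {l : Filter ι} {Y : ι → Ω → F} {c : F}
    (h : TendstoInDistribution Y l (fun _ => c) (fun _ => P) Q) :
    TendstoInMeasure P Y l fun _ => c := by
  intro δ hδ
  have hclosed : IsClosed {y : F | δ ≤ edist y c} :=
    isClosed_le continuous_const (continuous_id.edist continuous_const)
  have hlimsup := ProbabilityMeasure.limsup_measure_closed_le_of_tendsto h.tendsto hclosed
  have hnull : c ∉ {y : F | δ ≤ edist y c} := by simpa using hδ.ne'
  simp only [ProbabilityMeasure.coe_mk, Measure.map_const, measure_univ, one_smul,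
    Measure.dirac_apply' c hclosed.measurableSet, Set.indicator_of_notMem hnull] at hlimsup
  have hlim := tendsto_of_le_liminf_of_limsup_le zero_le hlimsup
  refine hlim.congr fun i => ?_
  rw [Measure.map_apply_of_aemeasurable (h.forall_aemeasurable i) hclosed.measurableSet]
  rfl

theorem tendsto_integral_of_tendstoInDistribution {Ω Ω' F ι : Type*} [MeasurableSpace Ω]
    [MeasurableSpace Ω'] [TopologicalSpace F] [MeasurableSpace F] [OpensMeasurableSpace F]
    {P : Measure Ω} [IsProbabilityMeasure P] {Q : Measure Ω'} [IsProbabilityMeasure Q]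
    {l : Filter ι} {Y : ι → Ω → F} {Z : Ω' → F}
    (h : TendstoInDistribution Y l Z (fun _ => P) Q) {g : F → ℝ} (hg : Continuous g) {M : ℝ}
    (hM : ∀ z, |g z| ≤ M) :
    Tendsto (fun n => ∫ ω, g (Y n ω) ∂P) l (nhds (∫ ω, g (Z ω) ∂Q)) := by
  have hlaw := ProbabilityMeasure.tendsto_iff_forall_integral_tendsto.1 h.tendsto
    (BoundedContinuousFunction.ofNormedAddCommGroup g hg M hM)
  simp only [ProbabilityMeasure.coe_mk, BoundedContinuousFunction.coe_ofNormedAddCommGroup]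
    at hlaw
  rw [integral_map h.aemeasurable_limit hg.measurable.aestronglyMeasurable] at hlaw
  refine hlaw.congr fun n => ?_
  rw [integral_map (h.forall_aemeasurable n) hg.measurable.aestronglyMeasurable]

end ConvergenceInDistribution

section PoissonIncrement

variable {E : Type*} [MeasurableSpace E] {κ : Kernel E E} [IsMarkovKernel κ] {ρ : Measure E}
  {F : E → ℝ}

theorem memLp_sub_integral_kernel [SFinite ρ] (hκ : Kernel.Invariant κ ρ) (hFm : Measurable F)
    (hF : MemLp F 2 ρ) : MemLp (fun p : E × E => F p.2 - ∫ y, F y ∂κ p.1) 2 (ρ ⊗ₘ κ) := by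
  have hfst : MeasurePreserving (Prod.fst : E × E → E) (ρ ⊗ₘ κ) ρ :=
    ⟨measurable_fst, Measure.fst_compProd ρ κ⟩
  have hsnd : MeasurePreserving (Prod.snd : E × E → E) (ρ ⊗ₘ κ) ρ :=
    ⟨measurable_snd, (Measure.snd_compProd ρ κ).trans hκ.def⟩
  exact (hF.comp_measurePreserving hsnd).sub
    ((memLp_two_integral_kernel hκ hFm hF).comp_measurePreserving hfst)

theorem ae_integral_sub_integral_kernel (hκ : Kernel.Invariant κ ρ) (hF : Integrable F ρ) :
    ∀ᵐ x ∂ρ, ∫ y, (F y - ∫ z, F z ∂κ x) ∂κ x = 0 := by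
  filter_upwards [ae_integrable_of_invariant hκ hF] with x hx
  rw [integral_sub hx (integrable_const _), integral_const, probReal_univ, one_smul, sub_self]

theorem integral_sq_sub_integral_kernel [IsFiniteMeasure ρ] (hκ : Kernel.Invariant κ ρ)
    (hFm : Measurable F) (hF : MemLp F 2 ρ) :
    ∫ p : E × E, (F p.2 - ∫ y, F y ∂κ p.1) ^ 2 ∂(ρ ⊗ₘ κ) =
      ∫ x, F x ^ 2 ∂ρ - ∫ x, (∫ y, F y ∂κ x) ^ 2 ∂ρ := by
  have hF2 := hF.integrable_sq
  rw [Measure.integral_compProd (memLp_sub_integral_kernel hκ hFm hF).integrable_sq,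
    ← integral_integral_of_invariant hκ hF2,
    ← integral_sub (integrable_integral_of_invariant hκ hF2)
      (memLp_two_integral_kernel hκ hFm hF).integrable_sq]
  refine integral_congr_ae ?_
  filter_upwards [ae_integrable_of_invariant hκ hF2] with x hx
  have hFx : MemLp F 2 (κ x) := (memLp_two_iff_integrable_sq hFm.aestronglyMeasurable).2 hx
  rw [← variance_eq_integral hFm.aemeasurable, variance_eq_sub hFx]
  rfl

end PoissonIncrement

section ChainCLT

variable {Ω E : Type*} [MeasurableSpace E] [MeasurableSpace Ω] {P : Measure Ω} {X : ℕ → Ω → E}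
  {κ : Kernel E E} {ρ : Measure E}

theorem measurable_sum_comp_chain (hX : ∀ n, Measurable (X n)) {f : E → ℝ} (hf : Measurable f)
    (n : ℕ) : Measurable fun ω => ∑ k ∈ Finset.Icc 1 n, f (X k ω) :=
  Finset.measurable_sum _ fun k _ => hf.comp (hX k)

theorem tendstoInMeasure_inv_sqrt_mul_comp_chain [IsFiniteMeasure P]
    (hX : ∀ n, Measurable (X n)) (hstat : ∀ n, P.map (X n) = ρ) {g : E → ℝ} (hg : Measurable g)
    (m : ℕ → ℕ) :
    TendstoInMeasure P (fun (n : ℕ) ω => (√n)⁻¹ * g (X (m n) ω)) atTop fun _ => 0 := by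
  have : IsFiniteMeasure ρ := hstat 0 ▸ inferInstance
  have hρ : TendstoInMeasure ρ (fun (n : ℕ) x => (√n)⁻¹ * g x) atTop fun _ => 0 := by
    refine tendstoInMeasure_of_tendsto_ae
      (fun n => (hg.const_mul _).aestronglyMeasurable) (ae_of_all _ fun x => ?_)
    simpa using tendsto_sqrt_natCast_atTop.inv_tendsto_atTop.mul_const (g x)
  intro δ hδ
  refine (hρ δ hδ).congr fun n => ?_
  rw [← hstat (m n), Measure.map_apply (hX _)
    (measurableSet_le measurable_const ((hg.const_mul _).edist measurable_const))]
  rfl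

theorem ae_sum_eq_of_poisson (hX : ∀ n, Measurable (X n)) (hstat : ∀ n, P.map (X n) = ρ)
    {f F : E → ℝ} (hf : ∀ᵐ x ∂ρ, f x = F x - ∫ y, F y ∂κ x) :
    ∀ᵐ ω ∂P, ∀ n, ∑ k ∈ Finset.Icc 1 n, f (X k ω) =
      ∑ k ∈ Finset.range n, (F (X (k + 1) ω) - ∫ y, F y ∂κ (X k ω)) +
        (∫ y, F y ∂κ (X 0 ω) - ∫ y, F y ∂κ (X n ω)) := by
  have hchain_eq : ∀ᵐ ω ∂P, ∀ n, f (X n ω) = F (X n ω) - ∫ y, F y ∂κ (X n ω) := by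
    refine ae_all_iff.2 fun n => ?_
    rw [← hstat n] at hf
    exact ae_of_ae_map (hX n).aemeasurable hf
  filter_upwards [hchain_eq] with ω hω n
  induction n with
  | zero => simp
  | succ n ih =>
    rw [Finset.sum_Icc_succ_top (Nat.le_add_left 1 n), ih, Finset.sum_range_succ, hω (n + 1)]
    ring

variable [IsProbabilityMeasure P] [IsMarkovKernel κ]

theorem tendstoInDistribution_martingale (hchain : IsMarkovChain P X κ)
    (hstat : ∀ n, P.map (X n) = ρ) (hmix : IsL1Mixing κ ρ) {d : E × E → ℝ} (hdm : Measurable d)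
    (hd : Integrable d (ρ ⊗ₘ κ)) (hd2 : Integrable (fun p => d p ^ 2) (ρ ⊗ₘ κ))
    (hd0 : ∀ᵐ x ∂ρ, ∫ y, d (x, y) ∂κ x = 0) :
    TendstoInDistribution
      (fun (n : ℕ) ω => (√n)⁻¹ * ∑ k ∈ Finset.range n, d (X k ω, X (k + 1) ω)) atTop id
      (fun _ => P) (gaussianReal 0 (∫ p, d p ^ 2 ∂(ρ ⊗ₘ κ)).toNNReal) := by
  have hm (n : ℕ) :
      AEMeasurable (fun ω => (√n)⁻¹ * ∑ k ∈ Finset.range n, d (X k ω, X (k + 1) ω)) P :=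
    ((Finset.measurable_sum _ fun k _ =>
      hdm.comp ((hchain.1 k).prodMk (hchain.1 (k + 1)))).const_mul _).aemeasurable
  refine ⟨hm, aemeasurable_id, ProbabilityMeasure.tendsto_iff_tendsto_charFun.2 fun t => ?_⟩
  convert tendsto_integral_expSum hchain hstat hmix hdm hd hd2 hd0 t using 2 with n
  · simp only [ProbabilityMeasure.coe_mk]
    rw [charFun_apply_real, integral_map (hm n) (by fun_prop)]
    simp only [expSum, div_eq_mul_inv, mul_assoc]
    push_cast
    simp only [mul_assoc]
  · simp only [ProbabilityMeasure.coe_mk, Measure.map_id]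
    rw [charFun_gaussianReal, Real.coe_toNNReal _ (integral_nonneg fun p => sq_nonneg (d p))]
    push_cast
    ring_nf

theorem tendstoInDistribution_of_poisson (hchain : IsMarkovChain P X κ)
    (hstat : ∀ n, P.map (X n) = ρ) (hmix : IsL1Mixing κ ρ) {f F : E → ℝ} (hFm : Measurable F)
    (hF : MemLp F 2 ρ) (hf : ∀ᵐ x ∂ρ, f x = F x - ∫ y, F y ∂κ x) :
    TendstoInDistribution (fun (n : ℕ) ω => (√n)⁻¹ * ∑ k ∈ Finset.Icc 1 n, f (X k ω)) atTop id
      (fun _ => P)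
      (gaussianReal 0 (∫ x, F x ^ 2 ∂ρ - ∫ x, (∫ y, F y ∂κ x) ^ 2 ∂ρ).toNNReal) := by
  have := isProbabilityMeasure_of_map_eq hchain hstat
  have hκ := invariant_of_isMarkovChain hchain hstat
  have hGm : Measurable fun x => ∫ y, F y ∂κ x := measurable_integral_kernel hFm
  have hd := memLp_sub_integral_kernel hκ hFm hF
  have hmart := tendstoInDistribution_martingale hchain hstat hmix
    (d := fun p => F p.2 - ∫ y, F y ∂κ p.1)
    ((hFm.comp measurable_snd).sub (hGm.comp measurable_fst)) (hd.integrable one_le_two)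
    hd.integrable_sq (ae_integral_sub_integral_kernel hκ (hF.integrable one_le_two))
  rw [integral_sq_sub_integral_kernel hκ hFm hF] at hmart
  have hboundary {g : E → ℝ} (hg : Measurable g) (m : ℕ → ℕ) (n : ℕ) :
      AEMeasurable (fun ω => (√n)⁻¹ * g (X (m n) ω)) P :=
    ((hg.comp (hchain.1 _)).const_mul _).aemeasurable
  have hlim := (hmart.add_of_tendstoInMeasure_const
    (tendstoInMeasure_inv_sqrt_mul_comp_chain hchain.1 hstat hGm fun _ => 0)
    (hboundary hGm _)).add_of_tendstoInMeasure_const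
    (tendstoInMeasure_inv_sqrt_mul_comp_chain hchain.1 hstat hGm.neg id)
    (hboundary hGm.neg id)
  refine hlim.congr (fun n => ?_) (ae_of_all _ fun z => by simp)
  filter_upwards [ae_sum_eq_of_poisson hchain.1 hstat hf] with ω hω
  simp only [Pi.add_apply, Pi.neg_apply, hω n, id]
  ring

variable {f : E → ℝ} {p : ℝ}

theorem tendstoInDistribution_chain (hchain : IsMarkovChain P X κ) (hstat : ∀ n, P.map (X n) = ρ)
    (hgeo : GeometricallyErgodic κ ρ) (hp : 2 < p) (hfm : Measurable f)
    (hf : MemLp f (ENNReal.ofReal p) ρ) (hf0 : ∫ x, f x ∂ρ = 0) :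
    TendstoInDistribution (fun (n : ℕ) ω => (√n)⁻¹ * ∑ k ∈ Finset.Icc 1 n, f (X k ω)) atTop id
      (fun _ => P) (gaussianReal 0 (asympCov κ ρ f f).toNNReal) := by
  have := isProbabilityMeasure_of_map_eq hchain hstat
  have hκ := invariant_of_isMarkovChain hchain hstat
  obtain ⟨F, hFm, hF, hFf, hvar⟩ := exists_poisson_solution hκ hfm
    (memLp_two_of_memLp_ofReal hp hf) hf0 (hgeo.summable_l2Dev hκ hp hfm hf)
  exact hvar ▸ tendstoInDistribution_of_poisson hchain hstat (hgeo.isL1Mixing hκ) hFm hF hFf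

theorem tendstoInMeasure_chain_average (hchain : IsMarkovChain P X κ)
    (hstat : ∀ n, P.map (X n) = ρ) (hgeo : GeometricallyErgodic κ ρ) (hp : 2 < p)
    (hfm : Measurable f) (hf : MemLp f (ENNReal.ofReal p) ρ) :
    TendstoInMeasure P (fun (n : ℕ) ω => (n : ℝ)⁻¹ * ∑ k ∈ Finset.Icc 1 n, f (X k ω)) atTop
      fun _ => ∫ x, f x ∂ρ := by
  have := isProbabilityMeasure_of_map_eq hchain hstat
  set m := ∫ x, f x ∂ρ with hm
  have hfi := (memLp_two_of_memLp_ofReal hp hf).integrable one_le_two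
  have hclt := tendstoInDistribution_chain hchain hstat hgeo hp (hfm.sub_const m)
    (hf.sub (memLp_const m)) (by
      rw [integral_sub hfi (integrable_const m), integral_const, probReal_univ, one_smul, hm,
        sub_self])
  have hscale : TendstoInMeasure P (fun (n : ℕ) (_ : Ω) => (√(n : ℝ))⁻¹) atTop fun _ => 0 :=
    tendstoInMeasure_of_tendsto_ae (fun _ => aestronglyMeasurable_const)
      (ae_of_all _ fun _ => tendsto_sqrt_natCast_atTop.inv_tendsto_atTop)
  have hlim := hclt.continuous_comp_prodMk_of_tendstoInMeasure_const
    (g := fun q : ℝ × ℝ => q.2 * q.1 + m) (by fun_prop) hscale fun _ => aemeasurable_const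
  simp only [zero_mul, zero_add] at hlim
  refine (tendstoInMeasure_of_tendstoInDistribution_const hlim).congr' ?_ EventuallyEq.rfl
  filter_upwards [eventually_gt_atTop 0] with n hn
  have hn' : (n : ℝ) ≠ 0 := Nat.cast_ne_zero.2 hn.ne'
  refine ae_of_all _ fun ω => ?_
  simp only [Finset.sum_sub_distrib, Finset.sum_const, Nat.card_Icc, Nat.add_sub_cancel,
    nsmul_eq_mul]
  rw [← mul_assoc, ← mul_inv, Real.mul_self_sqrt n.cast_nonneg]
  field_simp
  ring

end ChainCLT

section RatioCLT

theorem tendstoInMeasure_comp_continuousAt_const {Ω F G ι : Type*} [MeasurableSpace Ω]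
    [PseudoEMetricSpace F] [PseudoEMetricSpace G] {P : Measure Ω} {l : Filter ι} {Y : ι → Ω → F}
    {c : F} (hY : TendstoInMeasure P Y l fun _ => c) {g : F → G} (hg : ContinuousAt g c) :
    TendstoInMeasure P (fun n ω => g (Y n ω)) l fun _ => g c := by
  intro δ hδ
  obtain ⟨η, hη, hclose⟩ := EMetric.continuousAt_iff.1 hg δ hδ
  refine tendsto_of_tendsto_of_tendsto_of_le_of_le tendsto_const_nhds (hY η hη)
    (fun _ => zero_le) fun n => measure_mono fun ω hω => ?_
  by_contra hlt
  exact (hclose (not_le.1 hlt)).not_ge hω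

variable {Ω Ω' : Type*} [MeasurableSpace Ω] [MeasurableSpace Ω'] {P : Measure Ω}
  [IsProbabilityMeasure P] {Q : Measure Ω'} [IsProbabilityMeasure Q]

theorem tendstoInDistribution_div_of_tendstoInMeasure {ι : Type*} {l : Filter ι}
    [l.IsCountablyGenerated] {Y W : ι → Ω → ℝ} {Z : Ω' → ℝ} {r : ℝ} (hr : r ≠ 0)
    (hY : TendstoInDistribution Y l Z (fun _ => P) Q) (hW : TendstoInMeasure P W l fun _ => r)
    (hWm : ∀ n, AEMeasurable (W n) P) :
    TendstoInDistribution (fun n ω => Y n ω / W n ω) l (fun ω => Z ω / r) (fun _ => P) Q := by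
  simp only [div_eq_mul_inv]
  exact hY.continuous_comp_prodMk_of_tendstoInMeasure_const (g := fun p : ℝ × ℝ => p.1 * p.2)
    (by fun_prop) (tendstoInMeasure_comp_continuousAt_const hW (continuousAt_inv₀ hr))
    fun n => (hWm n).inv

theorem tendstoInDistribution_congr_of_ne_zero {ι : Type*} {l : Filter ι} [l.IsCountablyGenerated]
    {Y W R : ι → Ω → ℝ} {Z : Ω' → ℝ} {r : ℝ} (hr : r ≠ 0)
    (hY : TendstoInDistribution Y l Z (fun _ => P) Q) (hW : TendstoInMeasure P W l fun _ => r)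
    (hRm : ∀ n, AEMeasurable (R n) P) (hYR : ∀ᶠ n in l, ∀ ω, W n ω ≠ 0 → R n ω = Y n ω) :
    TendstoInDistribution R l Z (fun _ => P) Q := by
  refine tendstoInDistribution_of_tendstoInMeasure_sub R Z hY (fun δ hδ => ?_) hRm
  refine tendsto_of_tendsto_of_tendsto_of_le_of_le' tendsto_const_nhds
    (hW (edist 0 r) (edist_pos.2 hr.symm)) (Eventually.of_forall fun _ => zero_le) ?_
  filter_upwards [hYR] with n hn
  refine measure_mono fun ω hω => ?_
  by_cases hzero : W n ω = 0
  · exact (congrArg (edist · r) hzero).ge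
  · exact absurd hω (by simpa [hn ω hzero] using hδ.ne')

theorem tendstoInDistribution_of_identDistrib_limit {Ω'' F ι : Type*} [MeasurableSpace Ω'']
    [TopologicalSpace F] [MeasurableSpace F] [OpensMeasurableSpace F] {R : Measure Ω''}
    [IsProbabilityMeasure R] {l : Filter ι} {Y : ι → Ω → F} {Z : Ω' → F} {T : Ω'' → F}
    (hY : TendstoInDistribution Y l Z (fun _ => P) Q) (hZT : IdentDistrib Z T Q R) :
    TendstoInDistribution Y l T (fun _ => P) R := by
  refine ⟨hY.forall_aemeasurable, hZT.aemeasurable_snd, ?_⟩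
  convert hY.tendsto using 2
  exact congrArg nhds (Subtype.ext hZT.map_eq.symm)

theorem gaussianReal_map_div_toNNReal (v r : ℝ) :
    (gaussianReal 0 v.toNNReal).map (· / r) = gaussianReal 0 (v / r ^ 2).toNNReal := by
  rw [gaussianReal_map_div_const, zero_div, Real.toNNReal_div' (sq_nonneg r)]
  congr 2
  exact (Real.toNNReal_of_nonneg _).symm

variable {E : Type*} [MeasurableSpace E] {X : ℕ → Ω → E} {κ : Kernel E E} [IsMarkovKernel κ]
  {ρ : Measure E} {u s : E → ℝ} {p : ℝ}

theorem tendstoInDistribution_chain_ratio (hchain : IsMarkovChain P X κ)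
    (hstat : ∀ n, P.map (X n) = ρ) (hgeo : GeometricallyErgodic κ ρ) (hp : 2 < p)
    (hum : Measurable u) (hu : MemLp u (ENNReal.ofReal p) ρ) (hsm : Measurable s)
    (hs : MemLp s (ENNReal.ofReal p) ρ) {c r : ℝ} (hr : ∫ x, s x ∂ρ = r) (hr0 : r ≠ 0)
    (hc : ∫ x, u x ∂ρ = c * r) :
    TendstoInDistribution
      (fun (n : ℕ) ω => √n * ((∑ k ∈ Finset.Icc 1 n, u (X k ω)) /
        (∑ k ∈ Finset.Icc 1 n, s (X k ω)) - c)) atTop id (fun _ => P)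
      (gaussianReal 0 ((asympCov κ ρ (fun x => u x - c * s x) fun x => u x - c * s x) /
        r ^ 2).toNNReal) := by
  have := isProbabilityMeasure_of_map_eq hchain hstat
  have hui := (memLp_two_of_memLp_ofReal hp hu).integrable one_le_two
  have hsi := (memLp_two_of_memLp_ofReal hp hs).integrable one_le_two
  have hfm : Measurable fun x => u x - c * s x := hum.sub (hsm.const_mul c)
  have hf0 : ∫ x, (u x - c * s x) ∂ρ = 0 := by
    rw [integral_sub hui (hsi.const_mul c), integral_const_mul, hc, hr, sub_self]
  have hclt := tendstoInDistribution_chain hchain hstat hgeo hp hfm (hu.sub (hs.const_mul c)) hf0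
  have hlln := hr ▸ tendstoInMeasure_chain_average hchain hstat hgeo hp hsm hs
  have hsum {f : E → ℝ} (hf : Measurable f) (n : ℕ) := measurable_sum_comp_chain hchain.1 hf n
  have hdiv := tendstoInDistribution_div_of_tendstoInMeasure hr0 hclt hlln
    fun n => ((hsum hsm n).const_mul _).aemeasurable
  have hratio := tendstoInDistribution_congr_of_ne_zero hr0 hdiv hlln
    (fun n => ((((hsum hum n).div (hsum hsm n)).sub_const c).const_mul √n).aemeasurable) ?_
  · refine tendstoInDistribution_of_identDistrib_limit hratio
      ⟨by fun_prop, aemeasurable_id, ?_⟩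
    rw [Measure.map_id]
    exact gaussianReal_map_div_toNNReal _ _
  · filter_upwards [eventually_gt_atTop 0] with n hn ω hω
    have hsum0 : ∑ k ∈ Finset.Icc 1 n, s (X k ω) ≠ 0 := right_ne_zero_of_mul hω
    have hn' : (0 : ℝ) < n := Nat.cast_pos.2 hn
    have hsqrt : √(n : ℝ) ≠ 0 := (Real.sqrt_pos.2 hn').ne'
    have hinv : (n : ℝ)⁻¹ = (√n)⁻¹ * (√n)⁻¹ := by rw [← mul_inv, Real.mul_self_sqrt hn'.le]
    rw [Pi.div_apply, Finset.sum_sub_distrib, ← Finset.mul_sum, div_sub' hsum0, hinv]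
    field_simp

end RatioCLT

section Sign

theorem measurable_realSign : Measurable Real.sign :=
  Measurable.ite measurableSet_Iio measurable_const
    (Measurable.ite measurableSet_Ioi measurable_const measurable_const)

theorem abs_realSign_le_one (x : ℝ) : |Real.sign x| ≤ 1 := by
  rcases Real.sign_apply_eq x with h | h | h <;> simp [h]

theorem abs_mul_realSign (x : ℝ) : |x| * Real.sign x = x := by
  rcases lt_trichotomy x 0 with h | h | h
  · rw [Real.sign_of_neg h, abs_of_neg h, mul_neg_one, neg_neg]
  · rw [h, abs_zero, zero_mul]
  · rw [Real.sign_of_pos h, abs_of_pos h, mul_one]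

variable {E : Type*} [MeasurableSpace E] {ν : Measure E} {f w : E → ℝ}

theorem integral_mul_sign_withDensity_abs_div (hw : Measurable w) {m : ℝ} (hm : 0 ≤ m) :
    ∫ x, f x * Real.sign (w x) ∂ν.withDensity (fun x => ENNReal.ofReal (|w x| / m)) =
      (∫ x, f x * w x ∂ν) / m := by
  rw [integral_withDensity_eq_integral_toReal_smul (by fun_prop)
    (ae_of_all _ fun x => ENNReal.ofReal_lt_top), ← integral_div]
  refine integral_congr_ae (ae_of_all _ fun x => ?_)
  beta_reduce
  rw [ENNReal.toReal_ofReal (by positivity), smul_eq_mul]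
  nth_rewrite 3 [← abs_mul_realSign (w x)]
  ring

theorem memLp_mul_sign (hw : Measurable w) {p : ENNReal} (hf : MemLp f p ν) :
    MemLp (fun x => f x * Real.sign (w x)) p ν := by
  refine hf.mono (hf.1.mul (measurable_realSign.comp hw).aestronglyMeasurable)
    (ae_of_all _ fun x => ?_)
  rw [norm_mul]
  exact mul_le_of_le_one_right (norm_nonneg _) (abs_realSign_le_one _)

theorem memLp_of_integrable_abs_rpow (hf : Measurable f) {p : ℝ} (hp : 0 < p)
    (hint : Integrable (fun x => |f x| ^ p) ν) : MemLp f (ENNReal.ofReal p) ν := by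
  rw [← integrable_norm_rpow_iff hf.aestronglyMeasurable (by simpa using hp)
    ENNReal.ofReal_ne_top, ENNReal.toReal_ofReal hp.le]
  exact hint

end Sign

theorem sign_corrected_mcmc_clt_general {Ω E : Type*} [MeasurableSpace Ω] [MeasurableSpace E]
    {P : Measure Ω} [IsProbabilityMeasure P] {μ : Measure E} {π h : E → ℝ} (hπm : Measurable π)
    (hhm : Measurable h) (hπ0 : ∫ x, π x ∂μ ≠ 0) {ρ : Measure E}
    (hρ : ρ = μ.withDensity (fun x => ENNReal.ofReal (|π x| / ∫ y, |π y| ∂μ)))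
    {κ : Kernel E E} [IsMarkovKernel κ] {X : ℕ → Ω → E} (hchain : IsMarkovChain P X κ)
    (hstat : ∀ n, P.map (X n) = ρ) (hgeo : GeometricallyErgodic κ ρ)
    (hmom : ∃ ε : ℝ, 0 < ε ∧ Integrable (fun x => |h x| ^ (2 + ε)) ρ) {I r : ℝ}
    (hI : I = (∫ x, h x * π x ∂μ) / ∫ x, π x ∂μ) (hr : r = ∫ x, Real.sign (π x) ∂ρ) :
    let s : E → ℝ := fun x => Real.sign (π x)
    let u : E → ℝ := fun x => h x * Real.sign (π x)
    TendstoInDistribution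
      (fun (n : ℕ) ω => √n * ((∑ k ∈ Finset.Icc 1 n, Real.sign (π (X k ω)) * h (X k ω)) /
        (∑ k ∈ Finset.Icc 1 n, Real.sign (π (X k ω))) - I)) atTop id (fun _ => P)
      (gaussianReal 0 ((asympCov κ ρ u u + I ^ 2 * asympCov κ ρ s s -
        2 * I * ((1 / 2) * (asympCov κ ρ u s + asympCov κ ρ s u))) / r ^ 2).toNNReal) := by
  intro s u
  obtain ⟨ε, hε, hmom⟩ := hmom
  have := isProbabilityMeasure_of_map_eq hchain hstat
  have hκ := invariant_of_isMarkovChain hchain hstat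
  have hp : 2 < 2 + ε := lt_add_of_pos_right 2 hε
  have hm : 0 < ∫ x, |π x| ∂μ := (abs_pos.2 hπ0).trans_le abs_integral_le_integral_abs
  have hsm : Measurable s := measurable_realSign.comp hπm
  have hum : Measurable u := hhm.mul hsm
  have hs (q : ENNReal) : MemLp s q ρ := by
    simpa only [one_mul] using memLp_mul_sign hπm (memLp_const (1 : ℝ))
  have hu : MemLp u (ENNReal.ofReal (2 + ε)) ρ :=
    memLp_mul_sign hπm (memLp_of_integrable_abs_rpow hhm (by linarith) hmom)
  have hr_eq : r = (∫ x, π x ∂μ) / ∫ x, |π x| ∂μ := by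
    simpa only [one_mul, ← hρ, ← hr] using
      integral_mul_sign_withDensity_abs_div (ν := μ) (f := fun _ => 1) hπm hm.le
  have hu_int : ∫ x, u x ∂ρ = I * r := by
    rw [hI, hr_eq, div_mul_div_cancel₀ hπ0, ← integral_mul_sign_withDensity_abs_div hπm hm.le, hρ]
  have hclt := tendstoInDistribution_chain_ratio hchain hstat hgeo hp hum hu hsm (hs _) hr.symm
    (hr_eq ▸ div_ne_zero hπ0 hm.ne') hu_int
  rw [asympCov_sub_const_mul hκ hum (memLp_two_of_memLp_ofReal hp hu)
    (hgeo.summable_l2Dev hκ hp hum hu) hsm (hs 2) (hgeo.summable_l2Dev hκ hp hsm (hs _))] at hclt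
  convert hclt using 4 with n ω
  · simp only [u, s, mul_comm]
  · congr 1
    ring

/-- CLT for the sign-corrected MCMC estimator: for a geometrically ergodic
stationary chain with invariant density `|π|/∫|π|` and a `2+ε` moment for `h`,
`√n (Î_n − I)` converges weakly to `N(0, σ²(h))` with
`σ²(h) = (C₁₁ + I²C₂₂ − 2I C₁₂)/r²`. -/
theorem sign_corrected_mcmc_clt
    {Ω E : Type*} [MeasurableSpace Ω] [MeasurableSpace E]
    (P : Measure Ω) [IsProbabilityMeasure P]
    (μ : Measure E) [SigmaFinite μ]
    (π h : E → ℝ) (hπm : Measurable π) (hhm : Measurable h)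
    (hπ : Integrable π μ) (hrpos : 0 < ∫ x, π x ∂μ)
    (hh : Integrable (fun x => h x * π x) μ)
    (ρ : Measure E)
    (hρ : ρ = μ.withDensity (fun x => ENNReal.ofReal (|π x| / ∫ y, |π y| ∂μ)))
    (κ : Kernel E E) [IsMarkovKernel κ]
    (X : ℕ → Ω → E) (hchain : IsMarkovChain P X κ)
    (hstat : ∀ n, P.map (X n) = ρ)
    (hinv : ρ.bind κ = ρ)
    (hgeo : GeometricallyErgodic κ ρ)
    (hmom : ∃ ε : ℝ, 0 < ε ∧ Integrable (fun x => |h x| ^ (2 + ε)) ρ)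
    (I r : ℝ)
    (hI : I = (∫ x, h x * π x ∂μ) / ∫ x, π x ∂μ)
    (hr : r = ∫ x, Real.sign (π x) ∂ρ)
    (C11 C22 C12 σ2 : ℝ)
    (hC11 : C11 = ∑' j : ℤ,
      kernelCov κ ρ (fun x => h x * Real.sign (π x))
        (fun x => h x * Real.sign (π x)) j.natAbs)
    (hC22 : C22 = ∑' j : ℤ,
      kernelCov κ ρ (fun x => Real.sign (π x)) (fun x => Real.sign (π x)) j.natAbs)
    (hC12 : C12 = (1 / 2) *
      ((∑' j : ℤ, kernelCov κ ρ (fun x => h x * Real.sign (π x))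
          (fun x => Real.sign (π x)) j.natAbs) +
       (∑' j : ℤ, kernelCov κ ρ (fun x => Real.sign (π x))
          (fun x => h x * Real.sign (π x)) j.natAbs)))
    (hσ2 : σ2 = (C11 + I ^ 2 * C22 - 2 * I * C12) / r ^ 2) :
    ∀ g : ℝ → ℝ, Continuous g → (∃ M : ℝ, ∀ z : ℝ, |g z| ≤ M) →
      Tendsto (fun n : ℕ => ∫ ω, g (Real.sqrt n *
          ((∑ k ∈ Finset.Icc 1 n, Real.sign (π (X k ω)) * h (X k ω)) /
            (∑ k ∈ Finset.Icc 1 n, Real.sign (π (X k ω))) - I)) ∂P)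
        atTop (nhds (∫ z, g z ∂(gaussianReal 0 (Real.toNNReal σ2)))) := by
  subst hC11 hC22 hC12 hσ2
  rintro g hg ⟨M, hM⟩
  exact tendsto_integral_of_tendstoInDistribution (sign_corrected_mcmc_clt_general hπm hhm
    hrpos.ne' hρ hchain hstat hgeo hmom hI hr) hg hM
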